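/- arXiv:1902.07871 — 2 statements merged into one kernel-verified Lean document; each statement's English description precedes it below -/
import Mathlib

section
/- Let ρ be a computable, shift-invariant, ergodic Borel probability measure on 2^ℕ, and suppose there is a constant D with ρ[x] ≥ 2^{−D·|x|} for every binary string x (equivalently, h_n^ρ is bounded above by D for all n). Let μ be a Borel probability measure with μ ≪_ML ρ, and write s = H(ρ). Then lim_n ∫ |h_n^ρ(Z) − s| dμ(Z) = 0. -/
open MeasureTheory Filter

/-- Cantor space: the space of infinite binary sequences. -/
abbrev Cantor : Type := ℕ → Bool

/-- Finite binary strings. -/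
abbrev BStr : Type := List Bool

/-- The cylinder set of sequences extending the string `x`. -/
def cyl (x : BStr) : Set Cantor := {Z | ∀ i : Fin x.length, Z i.1 = x.get i}

/-- The string of the first `n` bits of `Z`. -/
def seg (Z : Cantor) (n : ℕ) : BStr := List.ofFn fun i : Fin n => Z i.1

/-- `lam` is the uniform (fair-coin product) measure: every cylinder `[x]`
has measure `2^{-|x|}`. -/
def IsUniform (lam : Measure Cantor) : Prop :=
  ∀ x : BStr, lam (cyl x) = (2 : ENNReal)⁻¹ ^ x.length

/-- `(G_m)` is a Martin-Löf test with respect to the measure `ρ`: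
the sets `G_m` are uniformly effectively open and `ρ (G_m) ≤ 2^{-m}`. -/
def IsMLTest (ρ : Measure Cantor) (G : ℕ → Set Cantor) : Prop :=
  (∃ σ : ℕ → ℕ → BStr, Computable₂ σ ∧ ∀ m, G m = ⋃ i, cyl (σ m i)) ∧
  ∀ m, ρ (G m) ≤ (2 : ENNReal)⁻¹ ^ m

/-- `μ` is Martin-Löf absolutely continuous in `ρ`: `inf_m μ(G_m) = 0`
for every `ρ`-Martin-Löf test `(G_m)`. -/
def MLAC (μ ρ : Measure Cantor) : Prop :=
  ∀ G : ℕ → Set Cantor, IsMLTest ρ G → ⨅ m, μ (G m) = 0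

/-- `Z` is Martin-Löf random with respect to `lam`. -/
def MLRandom (lam : Measure Cantor) (Z : Cantor) : Prop :=
  ∀ G : ℕ → Set Cantor, IsMLTest lam G → Z ∉ ⋂ m, G m

/-- `ρ` is a computable measure: `ρ [x]` is a computable real, uniformly in `x`. -/
def ComputableMeasure (ρ : Measure Cantor) : Prop :=
  ∃ q : BStr → ℕ → ℚ, Computable₂ q ∧
    ∀ x k, |(q x k : ℝ) - (ρ (cyl x)).toReal| ≤ (2 : ℝ)⁻¹ ^ k

/-- `U` is a universal plain machine. -/
def UniversalPlain (U : BStr →. BStr) : Prop :=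
  Partrec U ∧ ∀ M : BStr →. BStr, Partrec M →
    ∃ c : ℕ, ∀ p x, x ∈ M p → ∃ q : BStr, q.length ≤ p.length + c ∧ x ∈ U q

/-- The domain of `M` is an antichain under the prefix relation. -/
def PrefixFreeDom (M : BStr →. BStr) : Prop :=
  ∀ p q : BStr, (M p).Dom → (M q).Dom → p <+: q → p = q

/-- `U` is a universal prefix-free machine. -/
def UniversalPrefixFree (U : BStr →. BStr) : Prop :=
  Partrec U ∧ PrefixFreeDom U ∧
  ∀ M : BStr →. BStr, Partrec M → PrefixFreeDom M →
    ∃ c : ℕ, ∀ p x, x ∈ M p → ∃ q : BStr, q.length ≤ p.length + c ∧ x ∈ U q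

/-- Kolmogorov complexity of the string `x` with respect to the machine `U`:
the minimal length of a `U`-description of `x`. -/
noncomputable def cpx (U : BStr →. BStr) (x : BStr) : ℕ :=
  sInf {n | ∃ q : BStr, q.length = n ∧ x ∈ U q}

/-- A natural number `n` identified with the string `0^n`. -/
def numStr (n : ℕ) : BStr := List.replicate n false

/-- Complexity of the natural number `n` (i.e., of the string `0^n`). -/
noncomputable def cpxN (U : BStr →. BStr) (n : ℕ) : ℕ := cpx U (numStr n)

/-- The `μ`-average complexity of the strings of length `n`:
`Σ_{|x|=n} cpx(x) · μ[x]`. -/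
noncomputable def avgCpx (U : BStr →. BStr) (μ : Measure Cantor) (n : ℕ) : ℝ :=
  ∑ v : Fin n → Bool, (cpx U (List.ofFn v) : ℝ) * (μ (cyl (List.ofFn v))).toReal

/-- A measure `μ` is trivial for the complexity given by the machine `U`
(e.g. K-trivial when `U` is the universal prefix-free machine, C-trivial
when `U` is the universal plain machine). -/
def MeasTrivial (U : BStr →. BStr) (μ : Measure Cantor) : Prop :=
  ∃ c : ℝ, ∀ n : ℕ, avgCpx U μ n ≤ (cpxN U n : ℝ) + c

/-- The shift operator on Cantor space. -/
def shift (Z : Cantor) : Cantor := fun n => Z (n + 1)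

/-- `H_n(ρ) = -(1/n) Σ_{|w|=n} ρ[w] log₂ ρ[w]`, the `n`-th entropy of `ρ`. -/
noncomputable def entropyAt (ρ : Measure Cantor) (n : ℕ) : ℝ :=
  -(1 / (n : ℝ)) * ∑ v : Fin n → Bool,
    (ρ (cyl (List.ofFn v))).toReal * Real.logb 2 (ρ (cyl (List.ofFn v))).toReal

/-- The empirical entropy of `ρ` along `Z` at length `n`:
`h_n^ρ(Z) = -(1/n) log₂ ρ[Z↾n]`. -/
noncomputable def empEntropy (ρ : Measure Cantor) (n : ℕ) (Z : Cantor) : ℝ :=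
  -(1 / (n : ℝ)) * Real.logb 2 (ρ (cyl (seg Z n))).toReal

/-!
The orbit of `μ`-almost every point leaves each effectively open set `U` with `ρ U < 1`. Indeed, by
the mean ergodic theorem a computable number `N y` of steps makes “start in `[y]`, then stay in `U`
for `N y` steps” have `ρ`-measure at most `q * ρ [y]`, for a fixed `q < 1`; iterating, an orbit
that stays in `U` passes a `ρ`-Martin-Löf test.

For rates `p < q`, the sets “some long prefix has `ρ`-measure above `2 ^ (-p n)`” and “some long
prefix has `ρ`-measure below `2 ^ (-q n)`” are effectively open up to a change of rate. If the first
one has measure less than one, then orbits leave it, and shift invariance turns the bound along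
the shifted sequence into one along the sequence itself. Otherwise `ρ`-almost every sequence has
infinitely many heavy prefixes and is parsed greedily into heavy blocks, apart from a set of
letters of small density by the maximal ergodic theorem. All parsings together have weight at
most one, so the second set has measure less than one, and orbits leave that one; deleting the first
`k` bits raises `ρ [Z↾n]` by at most a polynomial factor outside a test. Which of the two cases
holds does not depend on `μ`, and `μ = ρ` shows that it is decided by the entropy.
-/

section ErgodicTheory

variable {α : Type*} {T : α → α} {f : α → ℝ}

/-- The maximum of the Birkhoff sums `birkhoffSum T f k`, `k ≤ n`. -/
noncomputable def maxBirkhoffSum (T : α → α) (f : α → ℝ) : ℕ → α → ℝ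
  | 0, _ => 0
  | n + 1, x => max 0 (f x + maxBirkhoffSum T f n (T x))

theorem maxBirkhoffSum_nonneg (n : ℕ) (x : α) : 0 ≤ maxBirkhoffSum T f n x := by
  cases n with
  | zero => exact le_rfl
  | succ n => exact le_max_left _ _

theorem maxBirkhoffSum_mono : Monotone (maxBirkhoffSum T f) := by
  refine monotone_nat_of_le_succ fun n => ?_
  induction n with
  | zero => exact fun x => maxBirkhoffSum_nonneg 1 x
  | succ n ih => exact fun x => max_le_max_left 0 (add_le_add_right (ih (T x)) (f x))

theorem birkhoffSum_le_maxBirkhoffSum (n : ℕ) (x : α) :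
    birkhoffSum T f n x ≤ maxBirkhoffSum T f n x := by
  induction n generalizing x with
  | zero => exact le_rfl
  | succ n ih =>
    rw [birkhoffSum_succ']
    exact (add_le_add_right (ih (T x)) (f x)).trans (le_max_right _ _)

theorem indicator_one_nonneg (A : Set α) : (0 : α → ℝ) ≤ A.indicator 1 :=
  fun _ => Set.indicator_nonneg (fun _ _ => zero_le_one) _

variable [MeasurableSpace α] {μ : Measure α}

theorem compMeasurePreserving_birkhoffAverage_ae_eq (hT : MeasurePreserving T μ μ)
    (hf : MemLp f 2 μ) (N : ℕ) :
    ((birkhoffAverage ℝ (Lp.compMeasurePreserving T hT) _root_.id N (hf.toLp f) : Lp ℝ 2 μ) :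
      α → ℝ) =ᵐ[μ] birkhoffAverage ℝ T f N := by
  have hiter : ∀ k, ((Lp.compMeasurePreserving T hT)^[k] (hf.toLp f) : α → ℝ)
      =ᵐ[μ] fun x => f (T^[k] x) := fun k => by
    rw [Lp.compMeasurePreserving_iterate, Lp.toLp_compMeasurePreserving]
    exact MemLp.coeFn_toLp _
  have hsum : ((birkhoffSum (Lp.compMeasurePreserving T hT) _root_.id N (hf.toLp f) :
      Lp ℝ 2 μ) : α → ℝ) =ᵐ[μ] birkhoffSum T f N := by
    refine (Lp.coeFn_finsetSum _ _).trans ?_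
    filter_upwards [ae_all_iff.2 hiter] with x hx
    simp only [_root_.id, Finset.sum_apply, hx, birkhoffSum]
  filter_upwards [Lp.coeFn_smul (N : ℝ)⁻¹
    (birkhoffSum (Lp.compMeasurePreserving T hT) _root_.id N (hf.toLp f)), hsum] with x hsmul hx
  rw [birkhoffAverage, hsmul, Pi.smul_apply, hx, birkhoffAverage]

theorem tendstoInMeasure_birkhoffAverage [IsProbabilityMeasure μ] (hT : Ergodic T μ)
    (hf : MemLp f 2 μ) :
    TendstoInMeasure μ (birkhoffAverage ℝ T f) atTop fun _ => ∫ x, f x ∂μ := by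
  have hmp := hT.toMeasurePreserving
  let U : Lp ℝ 2 μ →L[ℝ] Lp ℝ 2 μ := (Lp.compMeasurePreservingₗᵢ ℝ T hmp).toContinuousLinearMap
  let K := U.eqLocus (1 : Lp ℝ 2 μ →L[ℝ] Lp ℝ 2 μ)
  have hlim := U.tendsto_birkhoffAverage_orthogonalProjection
    (LinearIsometry.norm_toContinuousLinearMap_le _) (hf.toLp f)
  set g : Lp ℝ 2 μ := (K.orthogonalProjectionOnto (hf.toLp f)).1
  obtain ⟨c, hc⟩ : ∃ c, (g : α → ℝ) =ᵐ[μ] Function.const α c := by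
    refine hT.ae_eq_const_of_ae_eq_comp_ae (Lp.aestronglyMeasurable _) ?_
    have hfix : Lp.compMeasurePreserving T hmp g = g := (K.orthogonalProjectionOnto _).2
    exact (Lp.coeFn_compMeasurePreserving g hmp).symm.trans (by rw [hfix])
  have hint : ∫ x, f x ∂μ = c := by
    let one := indicatorConstLp 2 MeasurableSet.univ (measure_ne_top μ _) (1 : ℝ)
    have hone : one ∈ K :=
      Lp.indicatorConstLp_compMeasurePreserving MeasurableSet.univ (measure_ne_top μ _) 1 hmp
    have horth : inner ℝ one (hf.toLp f - g) = 0 := by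
      rw [real_inner_comm]
      exact K.starProjection_inner_eq_zero _ one hone
    rw [inner_sub_right, sub_eq_zero, L2.inner_indicatorConstLp_one, L2.inner_indicatorConstLp_one,
      setIntegral_univ, setIntegral_univ, integral_congr_ae hf.coeFn_toLp,
      integral_congr_ae hc] at horth
    simpa using horth
  rw [hint]
  exact (tendstoInMeasure_of_tendsto_Lp hlim).congr
    (compMeasurePreserving_birkhoffAverage_ae_eq hmp hf) hc

theorem integrable_maxBirkhoffSum (hT : MeasurePreserving T μ μ) (hf : Integrable f μ) (n : ℕ) :
    Integrable (maxBirkhoffSum T f n) μ := by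
  induction n with
  | zero => exact integrable_zero _ _ _
  | succ n ih => exact (integrable_zero _ _ _).sup (hf.add (hT.integrable_comp_of_integrable ih))

theorem nullMeasurableSet_maxBirkhoffSum_pos (hT : MeasurePreserving T μ μ)
    (hf : Integrable f μ) (n : ℕ) : NullMeasurableSet {x | 0 < maxBirkhoffSum T f n x} μ :=
  nullMeasurableSet_lt aemeasurable_const (integrable_maxBirkhoffSum hT hf n).aemeasurable

/-- Hopf's maximal ergodic theorem, with Garsia's proof. -/
theorem setIntegral_maxBirkhoffSum_pos_nonneg (hT : MeasurePreserving T μ μ) (hf : Integrable f μ)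
    (n : ℕ) : 0 ≤ ∫ x in {x | 0 < maxBirkhoffSum T f n x}, f x ∂μ := by
  obtain _ | n := n
  · simp [maxBirkhoffSum]
  set E := {x | 0 < maxBirkhoffSum T f (n + 1) x}
  have hE : NullMeasurableSet E μ := nullMeasurableSet_maxBirkhoffSum_pos hT hf (n + 1)
  have hint := integrable_maxBirkhoffSum hT hf
  have hle : ∀ x, maxBirkhoffSum T f (n + 1) x - maxBirkhoffSum T f n (T x) ≤ E.indicator f x := by
    intro x
    by_cases hx : x ∈ E
    · rw [Set.indicator_of_mem hx, sub_le_iff_le_add]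
      exact max_le ((lt_max_iff.1 hx).resolve_left (lt_irrefl 0)).le le_rfl
    · rw [Set.indicator_of_notMem hx]
      linarith [not_lt.1 (show ¬0 < maxBirkhoffSum T f (n + 1) x from hx),
        maxBirkhoffSum_nonneg (T := T) (f := f) n (T x)]
  calc 0 ≤ ∫ x, maxBirkhoffSum T f (n + 1) x ∂μ - ∫ x, maxBirkhoffSum T f n x ∂μ :=
        sub_nonneg.2 (integral_mono (hint n) (hint (n + 1)) (maxBirkhoffSum_mono n.le_succ))
    _ = ∫ x, (maxBirkhoffSum T f (n + 1) x - maxBirkhoffSum T f n (T x)) ∂μ := by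
        have hcomp : ∫ x, maxBirkhoffSum T f n (T x) ∂μ = ∫ x, maxBirkhoffSum T f n x ∂μ := by
          conv_rhs => rw [← hT.map_eq]
          exact (integral_map hT.aemeasurable (by rw [hT.map_eq]; exact (hint n).1)).symm
        rw [← hcomp]
        exact (integral_sub (hint (n + 1)) (hT.integrable_comp_of_integrable (hint n))).symm
    _ ≤ ∫ x, E.indicator f x ∂μ :=
        integral_mono ((hint (n + 1)).sub (hT.integrable_comp_of_integrable (hint n)))
          (hf.indicator₀ hE) hle
    _ = ∫ x in E, f x ∂μ := integral_indicator₀ hE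

theorem measureReal_exists_lt_birkhoffSum_le [IsFiniteMeasure μ] (hT : MeasurePreserving T μ μ)
    (hf : Integrable f μ) (hf0 : 0 ≤ f) {δ : ℝ} (hδ : 0 < δ) :
    μ.real {x | ∃ n : ℕ, δ * n < birkhoffSum T f n x} ≤ (∫ x, f x ∂μ) / δ := by
  set E : ℕ → Set α := fun n => {x | 0 < maxBirkhoffSum T (fun x => f x - δ) n x}
  have hfδ : Integrable (fun x => f x - δ) μ := hf.sub (integrable_const δ)
  have hsub : {x | ∃ n : ℕ, δ * n < birkhoffSum T f n x} ⊆ ⋃ n, E n := by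
    rintro x ⟨n, hn⟩
    refine Set.mem_iUnion.2 ⟨n, lt_of_lt_of_le ?_ (birkhoffSum_le_maxBirkhoffSum n x)⟩
    simp only [birkhoffSum, Finset.sum_sub_distrib, Finset.sum_const, Finset.card_range,
      nsmul_eq_mul] at hn ⊢
    linarith
  have hE : ∀ n, μ.real (E n) ≤ (∫ x, f x ∂μ) / δ := fun n => by
    have hpos := setIntegral_maxBirkhoffSum_pos_nonneg hT hfδ n
    rw [integral_sub hf.integrableOn (integrable_const δ), setIntegral_const, smul_eq_mul] at hpos
    rw [le_div_iff₀ hδ]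
    linarith [setIntegral_le_integral (s := E n) hf (ae_of_all _ hf0)]
  have hmono : Monotone E := fun m n hmn x hx => lt_of_lt_of_le hx (maxBirkhoffSum_mono hmn x)
  refine (measureReal_mono hsub).trans (ENNReal.toReal_le_of_le_ofReal
    (div_nonneg (integral_nonneg hf0) hδ.le) ?_)
  rw [hmono.measure_iUnion]
  exact iSup_le fun n => (ENNReal.le_ofReal_iff_toReal_le (measure_ne_top _ _)
    (div_nonneg (integral_nonneg hf0) hδ.le)).2 (hE n)

variable [IsFiniteMeasure μ] {A B : Set α}

theorem mul_measureReal_inter_forall_iterate_mem_le (hT : MeasurePreserving T μ μ)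
    (hA : MeasurableSet A) (hB : MeasurableSet B) (N : ℕ) :
    N * μ.real (A ∩ {x | ∀ i < N, T^[i] x ∈ B}) ≤
      ∫ x in T^[N - 1] ⁻¹' B, birkhoffSum T (A.indicator 1) N x ∂μ := by
  have hTm : ∀ n, Measurable T^[n] := fun n => (hT.iterate n).measurable
  have hshift : ∀ j < N, μ.real (A ∩ T^[N - 1 - j] ⁻¹' B) =
      μ.real (T^[j] ⁻¹' A ∩ T^[N - 1] ⁻¹' B) := by
    intro j hj
    rw [← (hT.iterate j).measureReal_preimage (hA.inter (hTm _ hB)).nullMeasurableSet,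
      Set.preimage_inter, ← Set.preimage_comp, ← Function.iterate_add,
      Nat.sub_add_cancel (by omega : j ≤ N - 1)]
  have hint : ∀ j, Integrable (fun x => A.indicator (1 : α → ℝ) (T^[j] x)) μ := fun j =>
    (hT.iterate j).integrable_comp_of_integrable ((integrable_const 1).indicator hA)
  calc N * μ.real (A ∩ {x | ∀ i < N, T^[i] x ∈ B})
      = ∑ _j ∈ Finset.range N, μ.real (A ∩ {x | ∀ i < N, T^[i] x ∈ B}) := by simp
    _ ≤ ∑ j ∈ Finset.range N, μ.real (A ∩ T^[N - 1 - j] ⁻¹' B) := by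
        refine Finset.sum_le_sum fun j hj =>
          measureReal_mono (Set.inter_subset_inter_right _ fun x hx => hx _ ?_)
        have := Finset.mem_range.1 hj
        omega
    _ = ∑ j ∈ Finset.range N, ∫ x in T^[N - 1] ⁻¹' B, A.indicator 1 (T^[j] x) ∂μ := by
        refine Finset.sum_congr rfl fun j hj => ?_
        rw [hshift j (Finset.mem_range.1 hj), ← measureReal_restrict_apply (hTm j hA)]
        exact (integral_indicator_one (hTm j hA)).symm
    _ = ∫ x in T^[N - 1] ⁻¹' B, birkhoffSum T (A.indicator 1) N x ∂μ :=
        (integral_finsetSum _ fun j _ => (hint j).integrableOn).symm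

theorem measurable_birkhoffSum (hT : Measurable T) (hf : Measurable f) (N : ℕ) :
    Measurable (birkhoffSum T f N) :=
  Finset.measurable_fun_sum _ fun i _ => hf.comp (hT.iterate i)

theorem setIntegral_birkhoffSum_indicator_le (hT : Measurable T) (hA : MeasurableSet A)
    (N : ℕ) {J : ℝ} (hJ : 0 ≤ J) :
    ∫ x in B, birkhoffSum T (A.indicator 1) N x ∂μ ≤
      J * μ.real B + N * μ.real {x | J < birkhoffSum T (A.indicator 1) N x} := by
  set S : α → ℝ := birkhoffSum T (A.indicator 1) N
  have hS : Measurable S := measurable_birkhoffSum hT (measurable_one.indicator hA) N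
  have hE : MeasurableSet {x | J < S x} := measurableSet_lt measurable_const hS
  have hS0 : ∀ x, 0 ≤ S x := fun x => Finset.sum_nonneg fun _ _ => indicator_one_nonneg A _
  have hSN : ∀ x, S x ≤ N := fun x => by
    refine (Finset.sum_le_card_nsmul _ _ 1 fun i _ => ?_).trans_eq (by simp)
    exact Set.indicator_le_self' (fun _ _ => zero_le_one) _
  have hbound : ∀ x, S x ≤ J + {x | J < S x}.indicator (fun _ => (N : ℝ)) x := by
    intro x
    by_cases hx : J < S x
    · rw [Set.indicator_of_mem (s := {x | J < S x}) hx]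
      linarith [hSN x]
    · rw [Set.indicator_of_notMem (s := {x | J < S x}) hx, add_zero]
      exact not_lt.1 hx
  have hind : Integrable ({x | J < S x}.indicator fun _ => (N : ℝ)) μ :=
    (integrable_const _).indicator hE
  have hSint : Integrable S μ := Integrable.of_bound hS.aestronglyMeasurable N
    (ae_of_all _ fun x => by rw [Real.norm_of_nonneg (hS0 x)]; exact hSN x)
  calc ∫ x in B, S x ∂μ
      ≤ ∫ x in B, (J + {x | J < S x}.indicator (fun _ => (N : ℝ)) x) ∂μ :=
        setIntegral_mono hSint.integrableOn ((integrable_const _).add hind).integrableOn hbound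
    _ = J * μ.real B + N * (μ.restrict B).real {x | J < S x} := by
        rw [integral_add (integrable_const _) hind.integrableOn, setIntegral_const,
          integral_indicator_const _ hE, smul_eq_mul, smul_eq_mul, mul_comm, mul_comm (N : ℝ)]
    _ ≤ J * μ.real B + N * μ.real {x | J < S x} := by
        gcongr
        exact ENNReal.toReal_mono (measure_ne_top _ _) (Measure.restrict_le_self _)

end ErgodicTheory

section Cantor

theorem iterate_shift_apply (k : ℕ) (Z : Cantor) (i : ℕ) : (shift^[k] Z) i = Z (i + k) := by
  induction k generalizing Z with
  | zero => rfl
  | succ _ ih => exact ih (shift Z)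

theorem measurable_shift : Measurable shift :=
  measurable_pi_lambda _ fun _ => measurable_pi_apply _

@[simp] theorem seg_zero (Z : Cantor) : seg Z 0 = [] := List.ofFn_zero

@[simp] theorem length_seg (Z : Cantor) (n : ℕ) : (seg Z n).length = n := List.length_ofFn

theorem getElem_seg (Z : Cantor) (n i : ℕ) (h : i < (seg Z n).length) : (seg Z n)[i] = Z i :=
  List.getElem_ofFn _

theorem take_seg (Z : Cantor) {n m : ℕ} (h : m ≤ n) : (seg Z n).take m = seg Z m :=
  List.ext_getElem (by simpa using h) fun i _ _ => by simp [getElem_seg]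

theorem drop_seg (Z : Cantor) (n k : ℕ) : (seg Z n).drop k = seg (shift^[k] Z) (n - k) :=
  List.ext_getElem (by simp) fun i _ _ => by
    simp [getElem_seg, iterate_shift_apply, Nat.add_comm]

theorem seg_add (Z : Cantor) (n m : ℕ) : seg Z (n + m) = seg Z n ++ seg (shift^[n] Z) m := by
  rw [← List.take_append_drop n (seg Z (n + m)), take_seg Z (Nat.le_add_right n m), drop_seg,
    Nat.add_sub_cancel_left]

theorem seg_prefix_seg (Z : Cantor) {n m : ℕ} (h : n ≤ m) : seg Z n <+: seg Z m :=
  take_seg Z h ▸ List.take_prefix n _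

theorem mem_cyl_iff {Z : Cantor} {x : BStr} : Z ∈ cyl x ↔ seg Z x.length = x := by
  refine ⟨fun h => List.ext_getElem (length_seg _ _) fun i h₁ h₂ => ?_, fun h i => ?_⟩
  · exact (getElem_seg Z _ i h₁).trans (h ⟨i, h₂⟩)
  · rw [← getElem_seg Z x.length i (by simp)]
    exact List.getElem_of_eq h _

theorem mem_cyl_seg (Z : Cantor) (n : ℕ) : Z ∈ cyl (seg Z n) := by
  rw [mem_cyl_iff, length_seg]

theorem mem_cyl_iff_prefix {Z : Cantor} {x : BStr} {n : ℕ} (h : x.length ≤ n) :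
    Z ∈ cyl x ↔ x <+: seg Z n := by
  rw [mem_cyl_iff, List.prefix_iff_eq_take, take_seg Z h, eq_comm]

theorem cyl_nil : cyl [] = Set.univ :=
  Set.eq_univ_of_forall fun _ i => i.elim0

theorem measurableSet_cyl (x : BStr) : MeasurableSet (cyl x) := by
  unfold cyl
  rw [Set.ofPred_forall]
  exact MeasurableSet.iInter fun i =>
    measurable_pi_apply (X := fun _ : ℕ => Bool) i.1 (MeasurableSet.singleton _)

theorem measurable_seg_comp {β : Type*} [MeasurableSpace β] (F : BStr → β) (n : ℕ) :
    Measurable fun Z => F (seg Z n) := by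
  intro s _
  have hunion : (fun Z => F (seg Z n)) ⁻¹' s =
      ⋃ x ∈ {x : BStr | x.length = n ∧ F x ∈ s}, cyl x := by
    ext Z
    simp only [Set.mem_preimage, Set.mem_iUnion, Set.mem_ofPred_eq, exists_prop]
    refine ⟨fun h => ⟨seg Z n, ⟨length_seg Z n, h⟩, mem_cyl_seg Z n⟩, ?_⟩
    rintro ⟨x, ⟨rfl, hx⟩, hZ⟩
    rwa [mem_cyl_iff.1 hZ]
  rw [hunion]
  exact MeasurableSet.biUnion (Set.to_countable _) fun x _ => measurableSet_cyl x

theorem measurableSet_seg (p : BStr → Prop) (n : ℕ) : MeasurableSet {Z | p (seg Z n)} :=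
  (measurable_seg_comp p n).setOf

theorem measurableSet_exists_seg (p : BStr → Prop) : MeasurableSet {Z | ∃ n, p (seg Z n)} := by
  rw [Set.ofPred_exists]
  exact MeasurableSet.iUnion fun n => measurableSet_seg p n

/-- The list of all binary strings of length `n`. -/
def wordList : ℕ → List BStr
  | 0 => [[]]
  | n + 1 => (wordList n).flatMap fun x => [false :: x, true :: x]

theorem mem_wordList {n : ℕ} {x : BStr} : x ∈ wordList n ↔ x.length = n := by
  induction n generalizing x with
  | zero => simp [wordList]
  | succ n ih => rcases x with _ | ⟨_ | _, x⟩ <;> simp [wordList, ih]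

theorem nodup_wordList (n : ℕ) : (wordList n).Nodup := by
  induction n with
  | zero => simp [wordList]
  | succ n ih =>
    rw [wordList, List.nodup_flatMap]
    refine ⟨fun x _ => by simp, ih.imp fun {a b} hab => ?_⟩
    simp [Function.onFun, hab.symm]

theorem length_wordList (n : ℕ) : (wordList n).length = 2 ^ n := by
  induction n with
  | zero => rfl
  | succ n ih => simp [wordList, List.length_flatMap, ih, pow_succ]

/-- The finset of all binary strings of length `n`. -/
def words (n : ℕ) : Finset BStr := (wordList n).toFinset

@[simp] theorem mem_words {n : ℕ} {x : BStr} : x ∈ words n ↔ x.length = n := by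
  rw [words, List.mem_toFinset, mem_wordList]

theorem card_words (n : ℕ) : (words n).card = 2 ^ n := by
  rw [words, List.toFinset_card_of_nodup (nodup_wordList n), length_wordList]

theorem sum_words_add {M : Type*} [AddCommMonoid M] (n m : ℕ) (f : BStr → M) :
    ∑ x ∈ words (n + m), f x = ∑ w ∈ words n, ∑ y ∈ words m, f (w ++ y) := by
  rw [← Finset.sum_product']
  refine Finset.sum_bij' (fun x _ => (x.take n, x.drop n)) (fun p _ => p.1 ++ p.2) ?_ ?_ ?_ ?_ ?_
  · intro x hx
    simp only [Finset.mem_product, mem_words, List.length_take, List.length_drop] at *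
    omega
  · intro p hp; simp_all
  · intro x _; simp
  · intro p hp; simp only [Finset.mem_product, mem_words] at hp; simp [← hp.1]
  · intro x _; simp

theorem sum_ofFn_eq_sum_words {M : Type*} [AddCommMonoid M] (n : ℕ) (f : BStr → M) :
    ∑ v : Fin n → Bool, f (List.ofFn v) = ∑ x ∈ words n, f x := by
  refine Finset.sum_bij (fun v _ => List.ofFn v) (fun v _ => by simp)
    (fun v _ w _ h => List.ofFn_injective h) (fun x hx => ?_) fun v _ => rfl
  obtain rfl := mem_words.1 hx
  exact ⟨x.get, Finset.mem_univ _, List.ofFn_get x⟩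

variable {ρ : Measure Cantor}

section FiniteMeasure

variable [IsFiniteMeasure ρ]

theorem integral_seg_comp (n : ℕ) (F : BStr → ℝ) :
    ∫ Z, F (seg Z n) ∂ρ = ∑ x ∈ words n, ρ.real (cyl x) * F x := by
  have hsum : ∀ Z, F (seg Z n) = ∑ x ∈ words n, (cyl x).indicator (fun _ => F x) Z := by
    intro Z
    rw [Finset.sum_eq_single (seg Z n), Set.indicator_of_mem (mem_cyl_seg Z n)]
    · intro x hx hne
      refine Set.indicator_of_notMem (fun h => hne ?_) _
      rw [← mem_words.1 hx, mem_cyl_iff.1 h]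
    · exact fun h => (h (mem_words.2 (length_seg Z n))).elim
  simp_rw [hsum]
  rw [integral_finsetSum _ fun x _ => (integrable_const _).indicator (measurableSet_cyl x)]
  refine Finset.sum_congr rfl fun x _ => ?_
  rw [integral_indicator_const _ (measurableSet_cyl x), smul_eq_mul]

open Classical in
theorem measureReal_seg (n : ℕ) (p : BStr → Prop) :
    ρ.real {Z | p (seg Z n)} = ∑ x ∈ words n with p x, ρ.real (cyl x) := by
  rw [← integral_indicator_one (measurableSet_seg p n), Finset.sum_filter]
  refine (integral_seg_comp n fun x => if p x then 1 else 0).trans ?_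
  simp only [mul_ite, mul_one, mul_zero]

theorem sum_measureReal_cyl_append (x : BStr) (m : ℕ) :
    ∑ y ∈ words m, ρ.real (cyl (x ++ y)) = ρ.real (cyl x) := by
  classical
  have hcyl : cyl x = {Z | x <+: seg Z (x.length + m)} :=
    Set.ext fun Z => mem_cyl_iff_prefix (Nat.le_add_right _ m)
  symm
  rw [hcyl, measureReal_seg (x.length + m) (x <+: ·), Finset.sum_filter, sum_words_add,
    Finset.sum_eq_single x]
  · simp
  · refine fun w hw hne => Finset.sum_eq_zero fun y _ => if_neg fun h => hne ?_
    rw [List.prefix_iff_eq_take, List.take_left' (mem_words.1 hw)] at h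
    exact h.symm
  · simp

theorem sum_measureReal_cyl_prepend (hT : MeasurePreserving shift ρ ρ) (x : BStr) (m : ℕ) :
    ∑ y ∈ words m, ρ.real (cyl (y ++ x)) = ρ.real (cyl x) := by
  classical
  have hcyl : shift^[m] ⁻¹' cyl x = {Z | (seg Z (m + x.length)).drop m = x} := by
    ext Z
    rw [Set.mem_preimage, mem_cyl_iff, Set.mem_ofPred_eq, drop_seg, Nat.add_sub_cancel_left]
  rw [← (hT.iterate m).measureReal_preimage (measurableSet_cyl x).nullMeasurableSet, hcyl,
    measureReal_seg (m + x.length) (fun z => z.drop m = x), Finset.sum_filter, sum_words_add]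
  refine Finset.sum_congr rfl fun y hy => ?_
  simp only [List.drop_left' (mem_words.1 hy), Finset.sum_ite_eq', mem_words, if_true]

theorem measureReal_cyl_seg_add_le (hT : MeasurePreserving shift ρ ρ) (Z : Cantor) (k n : ℕ) :
    ρ.real (cyl (seg Z (k + n))) ≤ ρ.real (cyl (seg (shift^[k] Z) n)) := by
  rw [← sum_measureReal_cyl_prepend hT (seg (shift^[k] Z) n) k, seg_add]
  exact Finset.single_le_sum (f := fun y => ρ.real (cyl (y ++ seg (shift^[k] Z) n)))
    (fun _ _ => measureReal_nonneg) (mem_words.2 (length_seg Z k))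

end FiniteMeasure

theorem sum_measureReal_cyl [IsProbabilityMeasure ρ] (n : ℕ) :
    ∑ x ∈ words n, ρ.real (cyl x) = 1 := by
  simpa [cyl_nil] using sum_measureReal_cyl_append (ρ := ρ) [] n

end Cantor

section RationalCodes

theorem computable_subtypeOfNat {s : Set ℕ} [Infinite s] [DecidablePred (· ∈ s)]
    (hs : ComputablePred (· ∈ s)) : Computable fun n => (Nat.Subtype.ofNat s n : ℕ) := by
  have hex : ∀ c : ℕ, ∃ m, c < m ∧ m ∈ s := fun c => by
    obtain ⟨m, hm, hcm⟩ := (Set.infinite_coe_iff.1 ‹Infinite s›).exists_gt c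
    exact ⟨m, hcm, hm⟩
  have hlt : Computable fun p : ℕ × ℕ => decide (p.1 < p.2) :=
    (Primrec.nat_lt.comp .fst .snd).decide.to_comp
  have hmem : Computable fun p : ℕ × ℕ => decide (p.2 ∈ s) := hs.decide.comp .snd
  have hnext : Computable fun c => Nat.find (hex c) :=
    Computable.find (P := fun c m => c < m ∧ m ∈ s) (Computable.computablePred <|
      (Primrec.and.to_comp.comp hlt hmem).of_eq fun p => (Bool.decide_and _ _).symm) hex
  refine (Computable.nat_rec (h := fun _ p => Nat.find (hex p.2)) Computable.id
    (Computable.const (Nat.Subtype.ofNat s 0 : ℕ))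
    (hnext.comp (Computable.snd.comp Computable.snd))).of_eq fun n => ?_
  induction n with
  | zero => rfl
  | succ n ih =>
    dsimp only [_root_.id] at ih ⊢
    rw [Nat.find_eq_iff, ih]
    refine ⟨⟨Nat.Subtype.lt_succ_self _, Subtype.coe_prop _⟩, fun m hm h => hm.not_ge ?_⟩
    exact Nat.Subtype.succ_le_of_lt (x := ⟨m, h.2⟩) h.1

/-- The code `Nat.pair (encode q.num) q.den` of a rational number. Mathlib's `Primcodable ℚ` comes
from the increasing enumeration of these codes. -/
def ratCode (q : ℚ) : ℕ := @Encodable.encode ℚ Rat.instEncodable q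

theorem ratCode_eq (q : ℚ) : ratCode q = Nat.pair (Encodable.encode q.num) q.den := rfl

instance : Infinite (Set.range ratCode) :=
  Set.infinite_coe_iff.2 <|
    Set.infinite_range_of_injective (@Encodable.encode_injective ℚ Rat.instEncodable)

instance : DecidablePred (· ∈ Set.range ratCode) :=
  @Encodable.decidableRangeEncode ℚ Rat.instEncodable

theorem ratCode_ofNat (n : ℕ) :
    ratCode (Denumerable.ofNat ℚ n) = Nat.Subtype.ofNat (Set.range ratCode) n :=
  congrArg Subtype.val <| (@Encodable.equivRangeEncode ℚ Rat.instEncodable).apply_symm_apply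
    (Nat.Subtype.ofNat (Set.range ratCode) n)

theorem primrec_natAbs : Primrec fun j : ℕ => (Denumerable.ofNat ℤ j).natAbs := by
  have : Primrec fun j : ℕ => (j + 1) / 2 := Primrec.nat_div.comp .succ (.const 2)
  refine this.of_eq fun j => ?_
  obtain ⟨z, rfl⟩ : ∃ z : ℤ, Encodable.encode z = j := ⟨_, Denumerable.encode_ofNat j⟩
  rw [Denumerable.ofNat_encode]
  rcases z with m | m
  · change (2 * m + 1) / 2 = m
    omega
  · change (2 * m + 1 + 1) / 2 = m + 1
    omega

theorem primrecRel_coprime : PrimrecRel Nat.Coprime := by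
  have hdvd : PrimrecRel fun d n : ℕ => n % d = 0 :=
    Primrec.eq.comp (Primrec.nat_mod.comp .snd .fst) (.const 0)
  have hrel : PrimrecRel fun (d : ℕ) (p : ℕ × ℕ) => d = 1 ∨ ¬(p.1 % d = 0 ∧ p.2 % d = 0) :=
    ((Primrec.eq.comp .fst (.const 1)).or
      ((hdvd.comp .fst (Primrec.fst.comp .snd)).and (hdvd.comp .fst (Primrec.snd.comp .snd))).not)
  refine PrimrecPred.of_eq (hrel.forall_mem_list.comp
    (Primrec.list_range.comp (Primrec.succ.comp Primrec.nat_add)) Primrec.id) fun ⟨a, b⟩ => ?_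
  simp only [List.mem_range, _root_.id, ← Nat.dvd_iff_mod_eq_zero]
  refine ⟨fun h => ?_, fun h d _ => or_iff_not_imp_right.2 fun hd => ?_⟩
  · have hlt : a.gcd b < a + b + 1 := by
      rcases Nat.eq_zero_or_pos b with rfl | hb
      · simp
      · exact (Nat.gcd_le_right a hb).trans_lt (by omega)
    exact (h _ hlt).resolve_right (not_not_intro ⟨Nat.gcd_dvd_left a b, Nat.gcd_dvd_right a b⟩)
  · obtain ⟨ha, hb⟩ := not_not.1 hd
    exact Nat.dvd_one.1 (h ▸ Nat.dvd_gcd ha hb)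

theorem mem_range_ratCode {c : ℕ} : c ∈ Set.range ratCode ↔
    0 < c.unpair.2 ∧ (Denumerable.ofNat ℤ c.unpair.1).natAbs.Coprime c.unpair.2 := by
  constructor
  · rintro ⟨q, rfl⟩
    rw [ratCode_eq, Nat.unpair_pair, Denumerable.ofNat_encode]
    exact ⟨q.den_pos, q.reduced⟩
  · rintro ⟨hpos, hcop⟩
    refine ⟨⟨_, _, hpos.ne', hcop⟩, ?_⟩
    rw [ratCode_eq, Denumerable.encode_ofNat, Nat.pair_unpair]

theorem computable_ratCode : Computable ratCode := by
  have hnum : Primrec fun c : ℕ => c.unpair.1 := Primrec.fst.comp .unpair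
  have hden : Primrec fun c : ℕ => c.unpair.2 := Primrec.snd.comp .unpair
  have hrange : PrimrecPred (· ∈ Set.range ratCode) :=
    ((Primrec.nat_lt.comp (.const 0) hden).and
      (primrecRel_coprime.comp (primrec_natAbs.comp hnum) hden)).of_eq
      fun _ => mem_range_ratCode.symm
  refine ((computable_subtypeOfNat hrange.computablePred).comp Computable.encode).of_eq
    fun q : ℚ => ?_
  rw [← ratCode_ofNat, Denumerable.ofNat_encode]

theorem primrec_pow : Primrec₂ fun a b : ℕ => a ^ b := Primrec₂.unpaired'.1 Nat.Primrec.pow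

theorem computable_floor_mul_two_pow : Computable₂ fun (q : ℚ) (k : ℕ) => ⌊q * 2 ^ k⌋₊ := by
  let F : ℕ × ℕ → ℕ := fun p =>
    if p.1.unpair.1 % 2 = 0 then p.1.unpair.1 / 2 * 2 ^ p.2 / p.1.unpair.2 else 0
  have hF : Primrec F := by
    have hnum : Primrec fun p : ℕ × ℕ => p.1.unpair.1 := Primrec.fst.comp (.comp .unpair .fst)
    have hden : Primrec fun p : ℕ × ℕ => p.1.unpair.2 := Primrec.snd.comp (.comp .unpair .fst)
    have hpow : Primrec fun p : ℕ × ℕ => 2 ^ p.2 :=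
      primrec_pow.comp (.const 2) .snd
    exact .ite (Primrec.eq.comp (Primrec.nat_mod.comp hnum (.const 2)) (.const 0))
      (Primrec.nat_div.comp (Primrec.nat_mul.comp (Primrec.nat_div.comp hnum (.const 2)) hpow) hden)
      (.const 0)
  refine (hF.to_comp.comp ((computable_ratCode.comp .fst).pair .snd)).of_eq fun ⟨q, k⟩ => ?_
  simp only [F, ratCode_eq, Nat.unpair_pair]
  rcases hq : q.num with m | m
  · have hqk : q * 2 ^ k = ((m * 2 ^ k : ℕ) : ℚ) / (q.den : ℕ) := by
      conv_lhs => rw [← Rat.num_div_den q, hq]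
      rw [Nat.cast_mul, Nat.cast_pow, Nat.cast_two, mul_div_right_comm]
      rfl
    have hm : Encodable.encode (Int.ofNat m) = 2 * m := rfl
    rw [hqk, Nat.floor_div_natCast, Nat.floor_natCast, hm, if_pos (Nat.mul_mod_right 2 m),
      Nat.mul_div_cancel_left m two_pos]
  · have hq0 : q ≤ 0 := Rat.num_nonpos.1 (by rw [hq]; exact (Int.negSucc_lt_zero m).le)
    have hm : Encodable.encode (Int.negSucc m) = 2 * m + 1 := rfl
    rw [hm, if_neg (by omega),
      Nat.floor_of_nonpos (mul_nonpos_of_nonpos_of_nonneg hq0 (by positivity))]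

end RationalCodes

section Computability

variable {α β : Type*} [Primcodable α] [Primcodable β]

theorem computablePred_lt {f g : α → ℕ} (hf : Computable f) (hg : Computable g) :
    ComputablePred fun a => f a < g a :=
  Computable.computablePred (Primrec.nat_lt.decide.to_comp.comp hf hg)

theorem computablePred_eq {f g : α → β} (hf : Computable f) (hg : Computable g) :
    ComputablePred fun a => f a = g a := by
  classical
  exact Computable.computablePred (Primrec.eq.decide.to_comp.comp hf hg)

theorem computable_ite {P : α → Prop} [DecidablePred P] {f g : α → β} (hP : ComputablePred P)
    (hf : Computable f) (hg : Computable g) : Computable fun a => if P a then f a else g a :=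
  (Computable.cond hP.decide hf hg).of_eq fun _ => Bool.cond_decide _ _ _

theorem computable_sum_range {f : α → ℕ → ℕ} {n : α → ℕ} (hf : Computable₂ f)
    (hn : Computable n) : Computable fun a => ∑ j ∈ Finset.range (n a), f a j := by
  refine (Computable.nat_rec (h := fun a p => p.2 + f a p.1) hn (Computable.const 0)
    (Primrec.nat_add.to_comp.comp (Computable.snd.comp .snd)
      (hf.comp .fst (Computable.fst.comp .snd)))).of_eq fun a => ?_
  induction n a with
  | zero => rfl
  | succ n ih => rw [Finset.sum_range_succ, ← ih]

theorem computablePred_exists_lt {P : α → ℕ → Prop} {n : α → ℕ}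
    (hP : ComputablePred fun p : α × ℕ => P p.1 p.2) (hn : Computable n) :
    ComputablePred fun a => ∃ j < n a, P a j := by
  classical
  have hsum := computable_sum_range (f := fun a j => if P a j then 1 else 0)
    (computable_ite hP (Computable.const 1) (Computable.const 0)) hn
  refine (computablePred_lt (Computable.const 0) hsum).of_eq fun a => ?_
  simp only [Finset.sum_pos_iff, Finset.mem_range]
  exact exists_congr fun j => and_congr_right fun _ => by split_ifs <;> simp [*]

theorem computablePred_forall_lt {P : α → ℕ → Prop} {n : α → ℕ}
    (hP : ComputablePred fun p : α × ℕ => P p.1 p.2) (hn : Computable n) :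
    ComputablePred fun a => ∀ j < n a, P a j :=
  (computablePred_exists_lt (P := fun a j => ¬P a j) hP.not hn).not.of_eq fun a => by
    push Not
    rfl

theorem computable_wordList : Computable wordList := by
  have hstep : Primrec fun l : List BStr => l.flatMap fun x => [false :: x, true :: x] :=
    Primrec.list_flatMap .id <| Primrec.list_cons.comp
      (Primrec.list_cons.comp (.const false) .snd) <| Primrec.list_cons.comp
      (Primrec.list_cons.comp (.const true) .snd) (.const [])
  have hstep₂ : Primrec₂ fun (_ : ℕ) (l : List BStr) =>
      l.flatMap fun x => [false :: x, true :: x] := hstep.comp .snd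
  refine (Primrec.nat_rec₁ [[]] hstep₂).to_comp.of_eq fun n => ?_
  induction n with
  | zero => rfl
  | succ n ih => rw [wordList, ← ih]

theorem computable_sum_words {f : α → BStr → ℕ} {n : α → ℕ} (hf : Computable₂ f)
    (hn : Computable n) : Computable fun a => ∑ x ∈ words (n a), f a x := by
  have hget : Computable₂ fun a j => ((wordList (n a))[j]?).getD [] :=
    Computable.option_getD
      (Computable.list_getElem?.comp (computable_wordList.comp (hn.comp .fst)) .snd) (.const [])
  have hterm : Computable₂ fun a j => f a (((wordList (n a))[j]?).getD []) := hf.comp .fst hget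
  refine (computable_sum_range hterm
    (primrec_pow.to_comp.comp (Computable.const 2) hn)).of_eq fun a => ?_
  rw [words, List.sum_toFinset _ (nodup_wordList _), ← length_wordList, Finset.sum_range,
    ← List.sum_ofFn]
  congr 1
  exact List.ext_getElem (by simp) fun i _ _ => by simp

theorem rePred_iff_exists {P : α → Prop} :
    REPred P ↔ ∃ p : α → ℕ → Bool, Computable₂ p ∧ ∀ a, P a ↔ ∃ k, p a k := by
  constructor
  · intro hP
    obtain ⟨c, hc⟩ := Nat.Partrec.Code.exists_code.1 hP
    refine ⟨fun a k => (c.evaln k (Encodable.encode a)).isSome, ?_, fun a => ?_⟩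
    · exact Primrec.option_isSome.to_comp.comp <| Nat.Partrec.Code.primrec_evaln.to_comp.comp <|
        (Computable.snd.pair (.const c)).pair (Computable.encode.comp .fst)
    · have hdom : P a ↔ (c.eval (Encodable.encode a)).Dom := by
        rw [hc]
        simp [Part.assert]
      simp only [hdom, Part.dom_iff_mem, Nat.Partrec.Code.evaln_complete, Option.isSome_iff_exists,
        Option.mem_def]
      exact exists_comm
  · rintro ⟨p, hp, hP⟩
    refine (Partrec.rfind (p := fun a k => Part.some (p a k)) hp).dom_re.of_eq fun a => ?_
    rw [hP]
    refine Nat.rfind_dom.trans <| exists_congr fun k => ?_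
    exact ⟨fun h => (Part.mem_some_iff.1 h.1).symm,
      fun h => ⟨Part.mem_some_iff.2 h.symm, fun _ => trivial⟩⟩

theorem rePred_and {P Q : α → Prop} (hP : REPred P) (hQ : REPred Q) :
    REPred fun a => P a ∧ Q a :=
  have hQ' : Partrec₂ fun (a : α) (_ : Unit) => Part.assert (Q a) fun _ => Part.some () :=
    Partrec.comp (f := fun a => Part.assert (Q a) fun _ => Part.some ()) hQ .fst
  (Partrec.bind hP hQ').dom_re.of_eq fun a => by simp [Part.assert, Part.bind]

theorem exists_computable_enumeration {R : α → β → Prop}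
    (hR : REPred fun p : α × β => R p.1 p.2) :
    ∃ e : α → ℕ → Option β, Computable₂ e ∧ ∀ a b, R a b ↔ ∃ k, b ∈ e a k := by
  obtain ⟨p, hp, hpR⟩ := rePred_iff_exists.1 hR
  refine ⟨fun a k => (Encodable.decode k.unpair.1 : Option β).bind fun b =>
    bif p (a, b) k.unpair.2 then some b else none, ?_, fun a b => (hpR (a, b)).trans ⟨?_, ?_⟩⟩
  · have hunpair : Computable fun q : α × ℕ => q.2.unpair := Primrec.unpair.to_comp.comp .snd
    refine Computable.option_bind (Computable.decode.comp (Computable.fst.comp hunpair)) ?_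
    exact Computable.cond (hp.comp ((Computable.fst.comp .fst).pair .snd)
      (Computable.snd.comp (hunpair.comp .fst))) (Computable.option_some.comp .snd) (.const none)
  · rintro ⟨k, hk⟩
    exact ⟨Nat.pair (Encodable.encode b) k, by simp [hk]⟩
  · rintro ⟨k, hk⟩
    obtain ⟨b', -, hb'⟩ := Option.bind_eq_some_iff.1 hk
    cases hpk : p (a, b') k.unpair.2 with
    | false => simp only [hpk, cond_false, reduceCtorEq] at hb'
    | true =>
      rw [hpk, cond_true, Option.some_inj] at hb'
      exact ⟨k.unpair.2, hb' ▸ hpk⟩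

theorem rePred_exists {R : α → β → Prop} (hR : REPred fun p : α × β => R p.1 p.2) :
    REPred fun a => ∃ b, R a b := by
  obtain ⟨e, he, heR⟩ := exists_computable_enumeration hR
  refine (Partrec.rfindOpt he).dom_re.of_eq fun a => ?_
  simp only [Nat.rfindOpt_dom, heR]
  exact exists_comm

theorem exists_computable_of_forall_exists {R : α → β → Prop}
    (hR : REPred fun p : α × β => R p.1 p.2) (hex : ∀ a, ∃ b, R a b) :
    ∃ f : α → β, Computable f ∧ ∀ a, R a (f a) := by
  obtain ⟨e, he, heR⟩ := exists_computable_enumeration hR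
  have hdom : ∀ a, (Nat.rfindOpt (e a)).Dom := fun a => Nat.rfindOpt_dom.2 <| by
    obtain ⟨b, hb⟩ := hex a
    obtain ⟨k, hk⟩ := (heR a b).1 hb
    exact ⟨k, b, hk⟩
  refine ⟨fun a => (Nat.rfindOpt (e a)).get (hdom a),
    (Partrec.rfindOpt he).of_eq_tot fun a => Part.get_mem _, fun a => ?_⟩
  exact (heR _ _).2 (Nat.rfindOpt_spec (Part.get_mem (hdom a)))

end Computability

section ComputableReals

variable {α β : Type*} [Primcodable α] [Primcodable β]

/-- A uniformly computable family of nonnegative reals. The value `f a` is approximated by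
`q a k / 2 ^ k` up to `e a / 2 ^ k`; the computable error bound `e` makes the notion closed under
finite sums without rescaling. -/
def ComputableReals (f : α → ℝ) : Prop :=
  ∃ (q : α → ℕ → ℕ) (e : α → ℕ), Computable₂ q ∧ Computable e ∧
    ∀ a k, |(q a k : ℝ) - 2 ^ k * f a| ≤ e a

namespace ComputableReals

theorem natCast {n : α → ℕ} (hn : Computable n) : ComputableReals fun a => (n a : ℝ) :=
  ⟨fun a k => 2 ^ k * n a, fun _ => 0, Primrec.nat_mul.to_comp.comp
    (primrec_pow.to_comp.comp (.const 2) .snd) (hn.comp .fst), .const 0, by simp⟩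

theorem comp {f : β → ℝ} {g : α → β} (hf : ComputableReals f) (hg : Computable g) :
    ComputableReals fun a => f (g a) := by
  obtain ⟨q, e, hq, he, h⟩ := hf
  exact ⟨fun a => q (g a), fun a => e (g a), hq.comp (hg.comp .fst) .snd, he.comp hg,
    fun a => h (g a)⟩

theorem natCast_mul {n : α → ℕ} {f : α → ℝ} (hn : Computable n) (hf : ComputableReals f) :
    ComputableReals fun a => (n a : ℝ) * f a := by
  obtain ⟨q, e, hq, he, h⟩ := hf
  refine ⟨fun a k => n a * q a k, fun a => n a * e a,
    Primrec.nat_mul.to_comp.comp (hn.comp .fst) hq, Primrec.nat_mul.to_comp.comp hn he,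
    fun a k => ?_⟩
  have hfactor : ((n a * q a k : ℕ) : ℝ) - 2 ^ k * (n a * f a) = n a * (q a k - 2 ^ k * f a) := by
    push_cast
    ring
  rw [hfactor, abs_mul, Nat.abs_cast, Nat.cast_mul]
  exact mul_le_mul_of_nonneg_left (h a k) (Nat.cast_nonneg _)

theorem sum_words {f : α → BStr → ℝ} {n : α → ℕ}
    (hf : ComputableReals fun p : α × BStr => f p.1 p.2) (hn : Computable n) :
    ComputableReals fun a => ∑ x ∈ words (n a), f a x := by
  obtain ⟨q, e, hq, he, h⟩ := hf
  refine ⟨fun a k => ∑ x ∈ words (n a), q (a, x) k, fun a => ∑ x ∈ words (n a), e (a, x),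
    ?_, computable_sum_words he hn, fun a k => ?_⟩
  · have hterm : Computable₂ fun (p : α × ℕ) (x : BStr) => q (p.1, x) p.2 :=
      hq.comp ((Computable.fst.comp .fst).pair .snd) (Computable.snd.comp .fst)
    exact computable_sum_words hterm (hn.comp .fst)
  · push_cast
    rw [Finset.mul_sum, ← Finset.sum_sub_distrib]
    exact (Finset.abs_sum_le_sum_abs _ _).trans (Finset.sum_le_sum fun x _ => h (a, x) k)

theorem ite_zero {P : α → Prop} [DecidablePred P] {f : α → ℝ} (hP : ComputablePred P)
    (hf : ComputableReals f) : ComputableReals fun a => if P a then f a else 0 := by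
  simpa using natCast_mul (computable_ite hP (.const 1) (.const 0)) hf

theorem rePred_lt {f g : α → ℝ} (hf : ComputableReals f) (hg : ComputableReals g) :
    REPred fun a => f a < g a := by
  obtain ⟨q, e, hq, he, hqe⟩ := hf
  obtain ⟨q', e', hq', he', hqe'⟩ := hg
  have hsep : ComputablePred fun p : α × ℕ => q p.1 p.2 + (e p.1 + e' p.1) < q' p.1 p.2 :=
    computablePred_lt (Primrec.nat_add.to_comp.comp hq
      (Primrec.nat_add.to_comp.comp (he.comp .fst) (he'.comp .fst))) hq'
  refine (rePred_exists (R := fun a k => q a k + (e a + e' a) < q' a k) hsep.to_re).of_eq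
    fun a => ⟨fun ⟨k, hk⟩ => ?_, fun hlt => ?_⟩
  · have hk' : (q a k : ℝ) + (e a + e' a) < q' a k := by exact_mod_cast hk
    have h1 := (abs_le.1 (hqe a k)).1
    have h2 := (abs_le.1 (hqe' a k)).2
    exact lt_of_mul_lt_mul_left (a := (2 : ℝ) ^ k) (by linarith) (by positivity)
  · obtain ⟨k, hk⟩ := pow_unbounded_of_one_lt (2 * (e a + e' a) / (g a - f a)) one_lt_two
    rw [div_lt_iff₀ (sub_pos.2 hlt)] at hk
    refine ⟨k, ?_⟩
    have h1 := (abs_le.1 (hqe a k)).2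
    have h2 := (abs_le.1 (hqe' a k)).1
    exact_mod_cast (by linarith : (q a k : ℝ) + (e a + e' a) < q' a k)

end ComputableReals

theorem ComputableMeasure.computableReals_cyl {ρ : Measure Cantor} (hρ : ComputableMeasure ρ) :
    ComputableReals fun x => ρ.real (cyl x) := by
  obtain ⟨r, hr, hrρ⟩ := hρ
  refine ⟨fun x k => ⌊r x k * 2 ^ k⌋₊, fun _ => 2, computable_floor_mul_two_pow.comp hr .snd,
    .const 2, fun x k => ?_⟩
  have hclose : |(r x k : ℝ) * 2 ^ k - 2 ^ k * ρ.real (cyl x)| ≤ 1 := by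
    rw [mul_comm, ← mul_sub, abs_mul, abs_of_pos (by positivity)]
    calc (2 : ℝ) ^ k * |(r x k : ℝ) - ρ.real (cyl x)| ≤ 2 ^ k * 2⁻¹ ^ k := by
          gcongr
          exact hrρ x k
      _ = 1 := by rw [← mul_pow, mul_inv_cancel₀ two_ne_zero, one_pow]
  have hnonneg : 0 ≤ 2 ^ k * ρ.real (cyl x) := by positivity
  have hfloor : ⌊r x k * 2 ^ k⌋₊ = ⌊(r x k : ℝ) * 2 ^ k⌋₊ := by
    rw [← Int.floor_toNat, ← Int.floor_toNat, ← Rat.floor_cast (α := ℝ)]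
    push_cast
    rfl
  beta_reduce
  rw [hfloor, abs_le]
  obtain ⟨hlo, hhi⟩ := abs_le.1 hclose
  have hlt := Nat.lt_floor_add_one ((r x k : ℝ) * 2 ^ k)
  rcases le_or_gt 0 ((r x k : ℝ) * 2 ^ k) with h0 | h0
  · have hle := Nat.floor_le h0
    constructor <;> push_cast <;> linarith
  · rw [Nat.floor_of_nonpos h0.le]
    constructor <;> push_cast <;> linarith

end ComputableReals

section MartinLofTests

variable {μ ρ : Measure Cantor}

theorem MLAC.refl (ρ : Measure Cantor) : MLAC ρ ρ := fun G hG => by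
  refine le_antisymm (ge_of_tendsto' (ENNReal.tendsto_pow_atTop_nhds_zero_of_lt_one
    (r := 2⁻¹) (by simp)) fun m => (iInf_le _ m).trans (hG.2 m)) zero_le

variable [IsProbabilityMeasure ρ]

theorem exists_computable_measureReal_cyl_lt (hρ : ComputableMeasure ρ) :
    ∃ d : ℕ → BStr, Computable d ∧ ∀ m, ρ.real (cyl (d m)) < 2⁻¹ ^ m := by
  have hR : REPred fun p : ℕ × BStr =>
      ((2 ^ p.1 : ℕ) : ℝ) * ρ.real (cyl p.2) < ((1 : ℕ) : ℝ) :=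
    ((hρ.computableReals_cyl.comp .snd).natCast_mul
      (primrec_pow.to_comp.comp (.const 2) .fst)).rePred_lt (.natCast (.const 1))
  have hex : ∀ m, ∃ x, ((2 ^ m : ℕ) : ℝ) * ρ.real (cyl x) < ((1 : ℕ) : ℝ) := by
    intro m
    by_contra! hall
    have hcard : ((2 ^ (m + 1) : ℕ) : ℝ) ≤ ∑ x ∈ words (m + 1), 2 ^ m * ρ.real (cyl x) := by
      rw [← card_words, ← nsmul_one]
      exact Finset.card_nsmul_le_sum _ _ _ fun x _ => by simpa using hall x
    rw [← Finset.mul_sum, sum_measureReal_cyl, pow_succ] at hcard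
    push_cast at hcard
    linarith [pow_pos (two_pos : (0 : ℝ) < 2) m]
  obtain ⟨d, hd, hdR⟩ := exists_computable_of_forall_exists hR hex
  refine ⟨d, hd, fun m => ?_⟩
  rw [inv_pow, ← one_div, lt_div_iff₀' (by positivity)]
  simpa using hdR m

/-- The cylinders of a test have to be listed without gaps, so the places where the enumeration of
`R` yields nothing are filled by a cylinder of small measure. -/
theorem MLAC.ae_exists_forall_not (hμ : MLAC μ ρ) (hρ : ComputableMeasure ρ)
    {R : ℕ → BStr → Prop} (hR : REPred fun p : ℕ × BStr => R p.1 p.2)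
    (hle : ∀ m, ρ.real {Z | ∃ n, R m (seg Z n)} ≤ 2⁻¹ ^ m) :
    ∀ᵐ Z ∂μ, ∃ m, ∀ n, ¬R m (seg Z n) := by
  obtain ⟨e, he, heR⟩ := exists_computable_enumeration hR
  obtain ⟨d, hd, hdρ⟩ := exists_computable_measureReal_cyl_lt hρ
  let σ : ℕ → ℕ → BStr := fun m i => (e (m + 1) i).getD (d (m + 1))
  have hσ : Computable₂ σ :=
    Computable.option_getD (he.comp (Computable.succ.comp .fst) .snd)
      (hd.comp (Computable.succ.comp .fst))
  have hsub : ∀ m, ⋃ i, cyl (σ m i) ⊆ {Z | ∃ n, R (m + 1) (seg Z n)} ∪ cyl (d (m + 1)) := by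
    intro m Z hZ
    obtain ⟨i, hi⟩ := Set.mem_iUnion.1 hZ
    cases hei : e (m + 1) i with
    | none => exact .inr (by simpa [σ, hei] using hi)
    | some x =>
      have hi' : Z ∈ cyl x := by simpa [σ, hei] using hi
      exact .inl ⟨x.length, by rw [mem_cyl_iff.1 hi']; exact (heR _ _).2 ⟨i, hei⟩⟩
  have htest : IsMLTest ρ fun m => ⋃ i, cyl (σ m i) := by
    refine ⟨⟨σ, hσ, fun _ => rfl⟩, fun m => ?_⟩
    have hreal : ρ.real (⋃ i, cyl (σ m i)) ≤ 2⁻¹ ^ m :=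
      calc ρ.real (⋃ i, cyl (σ m i))
          ≤ ρ.real {Z | ∃ n, R (m + 1) (seg Z n)} + ρ.real (cyl (d (m + 1))) :=
            (measureReal_mono (hsub m)).trans (measureReal_union_le _ _)
        _ ≤ 2⁻¹ ^ (m + 1) + 2⁻¹ ^ (m + 1) := add_le_add (hle _) (hdρ _).le
        _ = 2⁻¹ ^ m := by ring
    rw [← ofReal_measureReal]
    refine (ENNReal.ofReal_le_ofReal hreal).trans_eq ?_
    rw [ENNReal.ofReal_pow (by norm_num), ENNReal.ofReal_inv_of_pos two_pos, ENNReal.ofReal_ofNat]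
  have hzero : ∀ m, μ {Z | ∀ m, ∃ n, R m (seg Z n)} ≤ μ (⋃ i, cyl (σ m i)) := by
    refine fun m => measure_mono fun Z hZ => ?_
    obtain ⟨n, hn⟩ := hZ (m + 1)
    obtain ⟨i, hi⟩ := (heR _ _).1 hn
    refine Set.mem_iUnion.2 ⟨i, ?_⟩
    rw [show σ m i = seg Z n by simp [σ, Option.mem_def.1 hi]]
    exact mem_cyl_seg Z n
  refine measure_mono_null (fun Z hZ => ?_)
    (le_antisymm ((le_iInf hzero).trans_eq (hμ _ htest)) zero_le)
  simpa using hZ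

end MartinLofTests

section IteratedTests

variable {α : Type*} [Primcodable α] {Q : BStr → BStr → Bool} {w w' : ℕ → BStr}

/-- The visits made by a sequence of strings `w` up to a given time: their number, together with the
last visited string. Initially `[]` is visited, and `w (n + 1)` is visited when it is `Q`-related
to the string visited last. -/
def visits (Q : BStr → BStr → Bool) (w : ℕ → BStr) : ℕ → ℕ × BStr
  | 0 => (0, [])
  | n + 1 => bif Q (visits Q w n).2 (w (n + 1)) then ((visits Q w n).1 + 1, w (n + 1))
    else visits Q w n

theorem visits_congr {n : ℕ} (h : ∀ i ≤ n, w i = w' i) : visits Q w n = visits Q w' n := by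
  induction n with
  | zero => rfl
  | succ n ih => rw [visits, visits, ih fun i hi => h i (by omega), h (n + 1) le_rfl]

theorem visits_take_seg (Z : Cantor) (n : ℕ) :
    visits Q (fun i => (seg Z n).take i) n = visits Q (seg Z) n :=
  visits_congr fun _ hi => take_seg Z hi

theorem computable_visits (hQ : Computable₂ Q) {w : α → ℕ → BStr} {n : α → ℕ}
    (hw : Computable₂ w) (hn : Computable n) : Computable fun a => visits Q (w a) (n a) := by
  have hstate : Computable fun p : α × ℕ × ℕ × BStr => p.2.2 := .comp .snd .snd
  have hnext : Computable fun p : α × ℕ × ℕ × BStr => w p.1 (p.2.1 + 1) :=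
    hw.comp .fst (Computable.succ.comp (Computable.fst.comp .snd))
  have hstep : Computable₂ fun (a : α) (p : ℕ × ℕ × BStr) =>
      bif Q p.2.2 (w a (p.1 + 1)) then (p.2.1 + 1, w a (p.1 + 1)) else p.2 :=
    Computable.cond (hQ.comp (Computable.snd.comp hstate) hnext)
      ((Computable.succ.comp (Computable.fst.comp hstate)).pair hnext) hstate
  refine (Computable.nat_rec hn (.const (0, [])) hstep).of_eq fun a => ?_
  induction n a with
  | zero => rfl
  | succ n ih => rw [visits, ← ih]

theorem visits_eq_or (n : ℕ) : visits Q w (n + 1) = visits Q w n ∨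
    Q (visits Q w n).2 (w (n + 1)) ∧
      visits Q w (n + 1) = ((visits Q w n).1 + 1, w (n + 1)) := by
  rw [visits]
  cases Q (visits Q w n).2 (w (n + 1)) <;> simp

theorem monotone_visits_fst : Monotone fun n => (visits Q w n).1 :=
  monotone_nat_of_le_succ fun n => by
    rcases visits_eq_or (Q := Q) (w := w) n with h | ⟨-, h⟩ <;> simp [h]

theorem visits_eq_of_fst_eq {n n' : ℕ} (hn : n ≤ n')
    (h : (visits Q w n').1 = (visits Q w n).1) : visits Q w n' = visits Q w n := by
  induction n', hn using Nat.le_induction with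
  | base => rfl
  | succ k hk ih =>
    have hmono : (visits Q w n).1 ≤ (visits Q w k).1 := monotone_visits_fst hk
    rcases visits_eq_or (Q := Q) (w := w) k with hsame | ⟨-, hnew⟩
    · rw [hsame] at h ⊢
      exact ih h
    · rw [hnew] at h
      dsimp only at h
      omega

theorem exists_visits_eq (hw : w 0 = []) (n : ℕ) :
    ∃ t, w t = (visits Q w n).2 ∧ visits Q w t = visits Q w n := by
  induction n with
  | zero => exact ⟨0, hw, rfl⟩
  | succ n ih =>
    rcases visits_eq_or (Q := Q) (w := w) n with h | ⟨-, h⟩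
    · rwa [h]
    · exact ⟨n + 1, by rw [h], rfl⟩

theorem exists_eventually_not_of_visits_lt (hw : w 0 = []) {m : ℕ}
    (h : ∀ n, (visits Q w n).1 < m) : ∃ t, ∀ᶠ n in atTop, ¬Q (w t) (w n) := by
  induction m with
  | zero => exact absurd (h 0) (by simp)
  | succ m ih =>
    by_cases hm : ∀ n, (visits Q w n).1 < m
    · exact ih hm
    push Not at hm
    obtain ⟨n, hn⟩ := hm
    have hlast : ∀ k ≥ n, visits Q w k = visits Q w n := fun k hk => by
      have hmono : (visits Q w n).1 ≤ (visits Q w k).1 := monotone_visits_fst hk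
      exact visits_eq_of_fst_eq hk (by have := h k; omega)
    obtain ⟨t, ht, -⟩ := exists_visits_eq (Q := Q) hw n
    refine ⟨t, (eventually_gt_atTop n).mono fun k hk hQ => ?_⟩
    obtain ⟨k, rfl⟩ := Nat.exists_eq_succ_of_ne_zero (by omega : k ≠ 0)
    have hsucc : visits Q w (k + 1) = ((visits Q w n).1 + 1, w (k + 1)) := by
      rw [visits, hlast k (by omega), ← ht, hQ, cond_true]
    have := h (k + 1)
    rw [hsucc] at this
    dsimp only at this
    omega

theorem exists_visit_of_lt_visits (hw : w 0 = []) {m n : ℕ} (h : m < (visits Q w n).1) :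
    ∃ t k, visits Q w t = (m, w t) ∧ Q (w t) (w k) := by
  induction n with
  | zero => exact absurd h (by simp [visits])
  | succ n ih =>
    by_cases hm : m < (visits Q w n).1
    · exact ih hm
    rcases visits_eq_or (Q := Q) (w := w) n with hsame | ⟨hQ, hnew⟩
    · exact absurd (hsame ▸ h) hm
    · obtain ⟨t, ht, hvt⟩ := exists_visits_eq (Q := Q) hw n
      rw [hnew] at h
      dsimp only at h
      refine ⟨t, n + 1, ?_, ht ▸ hQ⟩
      rw [hvt, ht]
      exact Prod.ext (by dsimp only; omega) rfl

variable {μ ρ : Measure Cantor}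

theorem measure_exists_le_visits_le [IsProbabilityMeasure ρ] {r : ENNReal}
    (hle : ∀ y, ρ {Z | Z ∈ cyl y ∧ ∃ n, Q y (seg Z n)} ≤ r * ρ (cyl y)) (m : ℕ) :
    ρ {Z | ∃ n, m ≤ (visits Q (seg Z) n).1} ≤ r ^ m := by
  induction m with
  | zero => simp
  | succ m ih =>
    let V : Set BStr := {y | visits Q (fun i => y.take i) y.length = (m, y)}
    have hV : ∀ {y Z}, y ∈ V → Z ∈ cyl y → visits Q (seg Z) y.length = (m, y) := by
      intro y Z hy hZ
      rw [← visits_take_seg, mem_cyl_iff.1 hZ, hy]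
    have hdisj : V.PairwiseDisjoint cyl := by
      intro y hy y' hy' hne
      refine Set.disjoint_left.2 fun Z hZ hZ' => hne ?_
      have h := hV hy hZ
      have h' := hV hy' hZ'
      have hvisits : visits Q (seg Z) y.length = visits Q (seg Z) y'.length :=
        (le_total y.length y'.length).elim
          (fun hlen => (visits_eq_of_fst_eq hlen (by rw [h, h'])).symm)
          (fun hlen => visits_eq_of_fst_eq hlen (by rw [h, h']))
      rw [h, h'] at hvisits
      exact congrArg Prod.snd hvisits
    have hsucc : {Z | ∃ n, m + 1 ≤ (visits Q (seg Z) n).1} ⊆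
        ⋃ y ∈ V, {Z | Z ∈ cyl y ∧ ∃ n, Q y (seg Z n)} := by
      rintro Z ⟨n, hn⟩
      obtain ⟨t, k, ht, hQ⟩ := exists_visit_of_lt_visits (seg_zero Z) hn
      refine Set.mem_biUnion (x := seg Z t) ?_ ⟨mem_cyl_seg Z t, k, hQ⟩
      change visits Q (fun i => (seg Z t).take i) (seg Z t).length = (m, seg Z t)
      rw [length_seg, visits_take_seg, ht]
    have hsub : ⋃ y ∈ V, cyl y ⊆ {Z | ∃ n, m ≤ (visits Q (seg Z) n).1} :=
      Set.iUnion₂_subset fun y hy Z hZ => ⟨y.length, by rw [hV hy hZ]⟩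
    calc ρ {Z | ∃ n, m + 1 ≤ (visits Q (seg Z) n).1}
        ≤ ∑' y : V, ρ {Z | Z ∈ cyl y ∧ ∃ n, Q y (seg Z n)} :=
          (measure_mono hsucc).trans (measure_biUnion_le _ (Set.to_countable _) _)
      _ ≤ ∑' y : V, r * ρ (cyl y) := ENNReal.tsum_le_tsum fun y => hle y
      _ = r * ρ (⋃ y ∈ V, cyl y) := by
          rw [ENNReal.tsum_mul_left,
            measure_biUnion (Set.to_countable _) hdisj fun y _ => measurableSet_cyl y]
      _ ≤ r * r ^ m := by gcongr; exact (measure_mono hsub).trans ih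
      _ = r ^ (m + 1) := (pow_succ' r m).symm

/-- A computable strategy which from every string reaches its target with conditional probability
at most `r < 1` is almost surely unsuccessful eventually, as its iterates form a test. -/
theorem MLAC.ae_exists_eventually_not [IsProbabilityMeasure ρ] (hμ : MLAC μ ρ)
    (hρ : ComputableMeasure ρ) (hQ : Computable₂ Q) {r : ENNReal} (hr : r < 1)
    (hle : ∀ y, ρ {Z | Z ∈ cyl y ∧ ∃ n, Q y (seg Z n)} ≤ r * ρ (cyl y)) :
    ∀ᵐ Z ∂μ, ∃ t, ∀ᶠ n in atTop, ¬Q (seg Z t) (seg Z n) := by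
  obtain ⟨c, hc⟩ := ((ENNReal.tendsto_pow_atTop_nhds_zero_of_lt_one hr).eventually
    (Iic_mem_nhds (by simp : (0 : ENNReal) < 2⁻¹))).exists
  let R : ℕ → BStr → Prop := fun m x => c * m ≤ (visits Q (fun i => x.take i) x.length).1
  have hR : REPred fun p : ℕ × BStr => R p.1 p.2 := by
    have htake : Computable₂ fun (p : ℕ × BStr) (i : ℕ) => p.2.take i :=
      Primrec.list_take.to_comp.comp .snd (Computable.snd.comp .fst)
    have hcount := Computable.fst.comp
      (computable_visits hQ htake (Computable.list_length.comp .snd))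
    refine ((computablePred_lt hcount
      (Primrec.nat_mul.to_comp.comp (.const c) .fst)).not.of_eq fun p => not_lt).to_re
  have hRseg : ∀ m Z n, R m (seg Z n) ↔ c * m ≤ (visits Q (seg Z) n).1 := fun m Z n => by
    simp only [R, length_seg, visits_take_seg]
  have hRle : ∀ m, ρ.real {Z | ∃ n, R m (seg Z n)} ≤ 2⁻¹ ^ m := by
    intro m
    simp only [hRseg]
    refine ENNReal.toReal_le_of_le_ofReal (by positivity)
      ((measure_exists_le_visits_le hle (c * m)).trans ?_)
    rw [pow_mul, ENNReal.ofReal_pow (by norm_num), ENNReal.ofReal_inv_of_pos two_pos,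
      ENNReal.ofReal_ofNat]
    exact pow_le_pow_left' hc m
  filter_upwards [hμ.ae_exists_forall_not hρ hR hRle] with Z ⟨m, hm⟩
  simp only [hRseg, not_le] at hm
  exact exists_eventually_not_of_visits_lt (seg_zero Z) hm

end IteratedTests

section Recurrence

variable {μ ρ : Measure Cantor}

/-- The number of occurrences of `y` in `x` that start at a position less than `N`. -/
def occurrences (y : BStr) (N : ℕ) (x : BStr) : ℕ :=
  ∑ i ∈ Finset.range N, if (x.drop i).take y.length = y then 1 else 0

theorem computable_occurrences {α : Type*} [Primcodable α] {y x : α → BStr} {N : α → ℕ}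
    (hy : Computable y) (hN : Computable N) (hx : Computable x) :
    Computable fun a => occurrences (y a) (N a) (x a) := by
  have hword : Computable fun q : α × ℕ => ((x q.1).drop q.2).take (y q.1).length :=
    Primrec.list_take.to_comp.comp (Computable.list_length.comp (hy.comp .fst))
      (Primrec.list_drop.to_comp.comp .snd (hx.comp .fst))
  have hterm : Computable₂ fun (a : α) (i : ℕ) =>
      if ((x a).drop i).take (y a).length = y a then 1 else 0 :=
    computable_ite (computablePred_eq hword (hy.comp .fst)) (.const 1) (.const 0)
  exact computable_sum_range hterm hN

theorem occurrences_seg (y : BStr) (N : ℕ) (Z : Cantor) :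
    (occurrences y N (seg Z (N + y.length)) : ℝ) =
      birkhoffSum shift ((cyl y).indicator 1) N Z := by
  rw [occurrences, birkhoffSum, Nat.cast_sum]
  refine Finset.sum_congr rfl fun i hi => ?_
  have hiN := Finset.mem_range.1 hi
  rw [drop_seg, take_seg _ (by omega)]
  by_cases h : shift^[i] Z ∈ cyl y
  · rw [if_pos (mem_cyl_iff.1 h), Set.indicator_of_mem h, Nat.cast_one, Pi.one_apply]
  · rw [if_neg (mt mem_cyl_iff.2 h), Set.indicator_of_notMem h, Nat.cast_zero]

variable [IsProbabilityMeasure ρ]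

theorem measureReal_lt_birkhoffSum_cyl (y : BStr) (N J : ℕ) :
    ρ.real {Z | (J : ℝ) < birkhoffSum shift ((cyl y).indicator 1) N Z} =
      ∑ x ∈ words (N + y.length), if J < occurrences y N x then ρ.real (cyl x) else 0 := by
  classical
  simp only [← occurrences_seg, Nat.cast_lt]
  rw [measureReal_seg _ fun x => J < occurrences y N x, Finset.sum_filter]
  exact Finset.sum_congr rfl fun _ _ => by congr

theorem exists_measureReal_lt_birkhoffSum_cyl_lt (herg : Ergodic shift ρ) {y : BStr}
    (hy : 0 < ρ.real (cyl y)) {M : ℝ} (hM : 0 < M) :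
    ∃ N J : ℕ, M * J < (M + 1) * N * ρ.real (cyl y) ∧
      M * ρ.real {Z | (J : ℝ) < birkhoffSum shift ((cyl y).indicator 1) N Z} <
        ρ.real (cyl y) := by
  set a := ρ.real (cyl y)
  set ε := a / (2 * M)
  have hε : 0 < ε := by positivity
  have hind : MemLp ((cyl y).indicator (1 : Cantor → ℝ)) 2 ρ :=
    (memLp_const 1).indicator (measurableSet_cyl y)
  have hlim := tendstoInMeasure_iff_measureReal_norm.1
    (tendstoInMeasure_birkhoffAverage herg hind) ε hε
  rw [integral_indicator_one (measurableSet_cyl y)] at hlim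
  obtain ⟨N, hN, hNε⟩ := ((hlim.eventually_lt_const (div_pos hy hM)).and
    (eventually_gt_atTop ⌈1 / ε⌉₊)).exists
  have hNε' : 1 < N * ε := by
    rw [← div_lt_iff₀ hε]
    exact Nat.lt_of_ceil_lt hNε
  have hN0 : (0 : ℝ) < N := by exact_mod_cast (Nat.zero_le _).trans_lt hNε
  have hJ := Nat.ceil_lt_add_one (show 0 ≤ N * (a + ε) by positivity)
  refine ⟨N, ⌈N * (a + ε)⌉₊, ?_, ?_⟩
  · have hMε : M * ε = a / 2 := by simp only [ε]; field_simp
    nlinarith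
  · rw [mul_comm, ← lt_div_iff₀ hM]
    refine (measureReal_mono fun Z hZ => ?_).trans_lt hN
    have hlt : N * (a + ε) < birkhoffSum shift ((cyl y).indicator 1) N Z :=
      (Nat.le_ceil _).trans_lt hZ
    rw [Set.mem_ofPred_eq, birkhoffAverage, smul_eq_mul, ← div_eq_inv_mul]
    refine le_trans ?_ (le_abs_self _)
    rw [le_sub_iff_add_le, le_div_iff₀ hN0]
    linarith

theorem computableReals_measureReal_lt_birkhoffSum_cyl (hρ : ComputableMeasure ρ) :
    ComputableReals fun q : BStr × ℕ × ℕ =>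
      ρ.real {Z | (q.2.2 : ℝ) < birkhoffSum shift ((cyl q.1).indicator 1) q.2.1 Z} := by
  have hN : Computable fun q : BStr × ℕ × ℕ => q.2.1 := Computable.fst.comp .snd
  have hJ : Computable fun q : BStr × ℕ × ℕ => q.2.2 := Computable.snd.comp .snd
  have hocc : ComputablePred fun r : (BStr × ℕ × ℕ) × BStr =>
      r.1.2.2 < occurrences r.1.1 r.1.2.1 r.2 :=
    computablePred_lt (hJ.comp .fst)
      (computable_occurrences (Computable.fst.comp .fst) (hN.comp .fst) .snd)
  have hterm : ComputableReals fun r : (BStr × ℕ × ℕ) × BStr =>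
      if r.1.2.2 < occurrences r.1.1 r.1.2.1 r.2 then ρ.real (cyl r.2) else 0 :=
    .ite_zero hocc (hρ.computableReals_cyl.comp .snd)
  have hlength : Computable fun q : BStr × ℕ × ℕ => q.2.1 + q.1.length :=
    Primrec.nat_add.to_comp.comp hN (Computable.list_length.comp .fst)
  simp only [measureReal_lt_birkhoffSum_cyl]
  exact .sum_words (f := fun (q : BStr × ℕ × ℕ) x =>
    if q.2.2 < occurrences q.1 q.2.1 x then ρ.real (cyl x) else 0) hterm hlength

theorem measureReal_cyl_inter_forall_iterate_mem_le (hT : MeasurePreserving shift ρ ρ)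
    {y : BStr} {B : Set Cantor} (hB : MeasurableSet B) {M : ℝ} (hM : 0 < M) {N J : ℕ}
    (hJ : M * J < (M + 1) * N * ρ.real (cyl y))
    (htail : M * ρ.real {Z | (J : ℝ) < birkhoffSum shift ((cyl y).indicator 1) N Z} <
      ρ.real (cyl y)) :
    ρ.real (cyl y ∩ {Z | ∀ i < N, shift^[i] Z ∈ B}) ≤ (ρ.real B + 2 / M) * ρ.real (cyl y) := by
  have hle := (mul_measureReal_inter_forall_iterate_mem_le hT (measurableSet_cyl y) hB N).trans
    (setIntegral_birkhoffSum_indicator_le measurable_shift (measurableSet_cyl y) N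
      (Nat.cast_nonneg J))
  rw [(hT.iterate _).measureReal_preimage hB.nullMeasurableSet] at hle
  have hN : (0 : ℝ) < N := by
    refine Nat.cast_pos.2 (Nat.pos_of_ne_zero fun h0 => ?_)
    rw [h0, Nat.cast_zero, mul_zero, zero_mul] at hJ
    exact hJ.not_ge (by positivity)
  set a := ρ.real (cyl y)
  set b := ρ.real B
  set tail := ρ.real {Z | (J : ℝ) < birkhoffSum shift ((cyl y).indicator 1) N Z}
  set X := ρ.real (cyl y ∩ {Z | ∀ i < N, shift^[i] Z ∈ B})
  refine le_of_mul_le_mul_left (a := M * N) ?_ (by positivity)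
  calc M * N * X = M * (N * X) := mul_assoc _ _ _
    _ ≤ M * (J * b + N * tail) := mul_le_mul_of_nonneg_left hle hM.le
    _ = M * J * b + N * (M * tail) := by ring
    _ ≤ (M + 1) * N * a * b + N * a := by gcongr
    _ = N * a * (M * b + b + 1) := by ring
    _ ≤ N * a * (M * b + 1 + 1) := by
        gcongr
        exact measureReal_le_one
    _ = M * N * ((b + 2 / M) * a) := by
        field_simp
        ring

theorem exists_computable_mixing_time (hρ : ComputableMeasure ρ) (herg : Ergodic shift ρ)
    (hpos : ∀ x, 0 < ρ.real (cyl x)) {M : ℕ} (hM : 0 < M) :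
    ∃ N : BStr → ℕ, Computable N ∧ ∀ y B, MeasurableSet B →
      ρ.real (cyl y ∩ {Z | ∀ i < N y, shift^[i] Z ∈ B}) ≤
        (ρ.real B + 2 / M) * ρ.real (cyl y) := by
  let tail : BStr × ℕ × ℕ → ℝ := fun q =>
    ρ.real {Z | (q.2.2 : ℝ) < birkhoffSum shift ((cyl q.1).indicator 1) q.2.1 Z}
  let good : BStr → ℕ × ℕ → Prop := fun y p =>
    ((M * p.2 : ℕ) : ℝ) < (((M + 1) * p.1 : ℕ) : ℝ) * ρ.real (cyl y) ∧
      (M : ℝ) * tail (y, p) < ρ.real (cyl y)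
  have hgood : REPred fun q : BStr × ℕ × ℕ => good q.1 q.2 := by
    have hcyl : ComputableReals fun q : BStr × ℕ × ℕ => ρ.real (cyl q.1) :=
      hρ.computableReals_cyl.comp .fst
    have hMJ : Computable fun q : BStr × ℕ × ℕ => M * q.2.2 :=
      Primrec.nat_mul.to_comp.comp (.const M) (Computable.snd.comp .snd)
    have hMN : Computable fun q : BStr × ℕ × ℕ => (M + 1) * q.2.1 :=
      Primrec.nat_mul.to_comp.comp (.const (M + 1)) (Computable.fst.comp .snd)
    exact rePred_and ((ComputableReals.natCast hMJ).rePred_lt (hcyl.natCast_mul hMN))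
      (((computableReals_measureReal_lt_birkhoffSum_cyl hρ).natCast_mul (.const M)).rePred_lt hcyl)
  have hex : ∀ y, ∃ p, good y p := fun y => by
    obtain ⟨N, J, hJ, hN⟩ := exists_measureReal_lt_birkhoffSum_cyl_lt herg (hpos y)
      (Nat.cast_pos.2 hM)
    exact ⟨(N, J), by push_cast; exact hJ, hN⟩
  obtain ⟨p, hp, hpgood⟩ := exists_computable_of_forall_exists hgood hex
  refine ⟨fun y => (p y).1, Computable.fst.comp hp, fun y B hB => ?_⟩
  obtain ⟨hJ, htail⟩ := hpgood y
  push_cast at hJ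
  exact measureReal_cyl_inter_forall_iterate_mem_le herg.toMeasurePreserving hB
    (Nat.cast_pos.2 hM) hJ htail

/-- A string is accepted once its length bounds the number of steps after which a prefix of it is
recognized. -/
theorem exists_computable_forall_exists_seg_iff {p : BStr → Prop} (hp : REPred p) :
    ∃ u : BStr → Bool, Computable u ∧ (∀ x y, x <+: y → u x → u y) ∧
      ∀ Z, (∃ n, u (seg Z n)) ↔ ∃ n, p (seg Z n) := by
  obtain ⟨f, hf, hfp⟩ := rePred_iff_exists.1 hp
  let A : BStr → Prop := fun x => ∃ i < x.length + 1, ∃ k < x.length + 1, f (x.take i) k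
  have hlength : Computable fun x : BStr => x.length + 1 :=
    Computable.succ.comp Computable.list_length
  have hA : ComputablePred A := by
    have htake : Computable fun q : (BStr × ℕ) × ℕ => q.1.1.take q.1.2 :=
      Primrec.list_take.to_comp.comp (Computable.snd.comp .fst) (Computable.fst.comp .fst)
    have hbase : ComputablePred fun q : (BStr × ℕ) × ℕ => f (q.1.1.take q.1.2) q.2 = true :=
      Computable.computablePred ((hf.comp htake .snd).of_eq fun q => by simp)
    exact computablePred_exists_lt (computablePred_exists_lt
      (P := fun (q : BStr × ℕ) k => f (q.1.take q.2) k) hbase (hlength.comp .fst)) hlength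
  classical
  refine ⟨fun x => decide (A x), hA.decide, fun x y hxy hx => ?_, fun Z => ⟨?_, ?_⟩⟩
  · obtain ⟨i, hi, k, hk, hf⟩ := of_decide_eq_true hx
    have hlen := hxy.length_le
    refine decide_eq_true ⟨i, by omega, k, by omega, ?_⟩
    obtain ⟨z, rfl⟩ := hxy
    rwa [List.take_append_of_le_length (by omega)]
  · rintro ⟨n, hn⟩
    obtain ⟨i, hi, k, -, hf⟩ := of_decide_eq_true hn
    rw [length_seg] at hi
    rw [take_seg Z (by omega)] at hf
    exact ⟨i, (hfp _).2 ⟨k, hf⟩⟩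
  · rintro ⟨n, hn⟩
    obtain ⟨k, hk⟩ := (hfp _).1 hn
    refine ⟨n + k, decide_eq_true ⟨n, ?_, k, ?_, ?_⟩⟩
    · rw [length_seg]; omega
    · rw [length_seg]; omega
    · rwa [take_seg Z (by omega)]

theorem eventually_forall_lt_drop_seg {u : BStr → Bool} (hmono : ∀ x y, x <+: y → u x → u y)
    {N : ℕ} {Z : Cantor} (h : ∀ i < N, ∃ n, u (seg (shift^[i] Z) n)) :
    ∀ᶠ n in atTop, ∀ i < N, u ((seg Z n).drop i) := by
  refine (eventually_all_finite (Set.finite_Iio N)).2 fun i hi => ?_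
  obtain ⟨n, hn⟩ := h i hi
  filter_upwards [eventually_ge_atTop (n + i)] with k hk
  rw [drop_seg]
  exact hmono _ _ (seg_prefix_seg _ (by omega)) hn

/-- Kučera's argument: an orbit that stays in an effectively open set of measure less than one
passes the nested tests “after the prefix `y`, stay in the set for another `N y` steps”. -/
theorem MLAC.ae_exists_forall_not_iterate_shift (hμ : MLAC μ ρ) (hρ : ComputableMeasure ρ)
    (herg : Ergodic shift ρ) (hpos : ∀ x, 0 < ρ.real (cyl x)) {p : BStr → Prop} (hp : REPred p)
    (hlt : ρ.real {Z | ∃ n, p (seg Z n)} < 1) :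
    ∀ᵐ Z ∂μ, ∃ k, ∀ n, ¬p (seg (shift^[k] Z) n) := by
  obtain ⟨u, hu, hmono, hup⟩ := exists_computable_forall_exists_seg_iff hp
  set U := {Z | ∃ n, p (seg Z n)}
  obtain ⟨M, hM⟩ := exists_nat_gt (2 / (1 - ρ.real U))
  have hM0 : (0 : ℝ) < M := (div_pos two_pos (sub_pos.2 hlt)).trans hM
  obtain ⟨N, hN, hle⟩ := exists_computable_mixing_time hρ herg hpos (Nat.cast_pos.1 hM0)
  let Q : BStr → BStr → Prop := fun y z => ∀ i < N y, u (z.drop i)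
  have hQ : ComputablePred fun q : BStr × BStr => Q q.1 q.2 := by
    have hdrop : Computable fun q : (BStr × BStr) × ℕ => q.1.2.drop q.2 :=
      Primrec.list_drop.to_comp.comp .snd (Computable.snd.comp .fst)
    exact computablePred_forall_lt (P := fun (q : BStr × BStr) i => u (q.2.drop i))
      (Computable.computablePred ((hu.comp hdrop).of_eq fun q => by simp)) (hN.comp .fst)
  have hQU : ∀ y Z, (∃ n, Q y (seg Z n)) → ∀ i < N y, shift^[i] Z ∈ U := by
    rintro y Z ⟨n, hn⟩ i hi
    refine (hup _).1 ⟨n - i, ?_⟩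
    rw [← drop_seg]
    exact hn i hi
  have hr : ρ.real U + 2 / M < 1 := by
    rw [div_lt_comm₀ (sub_pos.2 hlt) hM0] at hM
    linarith
  have hQle : ∀ y, ρ {Z | Z ∈ cyl y ∧ ∃ n, Q y (seg Z n)} ≤
      ENNReal.ofReal (ρ.real U + 2 / M) * ρ (cyl y) := by
    intro y
    rw [← ofReal_measureReal (s := cyl y), ← ENNReal.ofReal_mul (by positivity)]
    have hsub : {Z | Z ∈ cyl y ∧ ∃ n, Q y (seg Z n)} ⊆
        cyl y ∩ {Z | ∀ i < N y, shift^[i] Z ∈ U} := fun Z hZ => ⟨hZ.1, hQU y Z hZ.2⟩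
    exact (measure_mono hsub).trans
      ((ENNReal.le_ofReal_iff_toReal_le (measure_ne_top _ _) (by positivity)).2
        (hle y U (measurableSet_exists_seg p)))
  classical
  filter_upwards [hμ.ae_exists_eventually_not hρ (Q := fun y z => decide (Q y z)) hQ.decide
    (ENNReal.ofReal_lt_one.2 hr) (by simpa using hQle)] with Z ⟨t, ht⟩
  by_contra! hall
  obtain ⟨n, hn, hn'⟩ := (ht.and (eventually_forall_lt_drop_seg hmono
    fun i (_ : i < N (seg Z t)) => (hup _).2 (hall i))).exists
  exact hn (decide_eq_true hn')

end Recurrence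

section LocalRates

section UnionBound

variable {ρ : Measure Cantor}

theorem sum_range_div_mul_succ (c : ℝ) (n : ℕ) :
    ∑ i ∈ Finset.range n, c / ((i + 1) * (i + 2)) = c - c / (n + 1) := by
  induction n with
  | zero => simp
  | succ n ih =>
    rw [Finset.sum_range_succ, ih]
    push_cast
    field_simp
    ring

theorem measureReal_iUnion_le_of_le_div {α : Type*} [MeasurableSpace α] {ν : Measure α}
    [IsFiniteMeasure ν] {E : ℕ → Set α} {c : ℝ} (hc : 0 ≤ c)
    (hE : ∀ n : ℕ, ν.real (E n) ≤ c / ((n + 1) * (n + 2))) : ν.real (⋃ n, E n) ≤ c := by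
  refine ENNReal.toReal_le_of_le_ofReal hc ((measure_iUnion_le E).trans
    (ENNReal.tsum_le_of_sum_range_le fun n => ?_))
  calc ∑ i ∈ Finset.range n, ν (E i) = ENNReal.ofReal (∑ i ∈ Finset.range n, ν.real (E i)) := by
        rw [ENNReal.ofReal_sum_of_nonneg fun i _ => measureReal_nonneg]
        exact Finset.sum_congr rfl fun i _ => by rw [ofReal_measureReal]
    _ ≤ ENNReal.ofReal (∑ i ∈ Finset.range n, c / ((i + 1) * (i + 2))) :=
        ENNReal.ofReal_le_ofReal (Finset.sum_le_sum fun i _ => hE i)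
    _ ≤ ENNReal.ofReal c := by
        rw [sum_range_div_mul_succ]
        exact ENNReal.ofReal_le_ofReal (sub_le_self _ (by positivity))

variable [IsFiniteMeasure ρ]

theorem measureReal_mul_lt_seg_le {V : BStr → ℝ} (hV : 0 ≤ V) {n : ℕ} {c : ℝ} (hc : 0 < c) :
    ρ.real {Z | c * ρ.real (cyl (seg Z n)) < V (seg Z n)} ≤ (∑ x ∈ words n, V x) / c := by
  classical
  rw [measureReal_seg n fun x => c * ρ.real (cyl x) < V x, le_div_iff₀ hc, mul_comm,
    Finset.mul_sum]
  exact (Finset.sum_le_sum fun x hx => (Finset.mem_filter.1 hx).2.le).trans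
    (Finset.sum_le_sum_of_subset_of_nonneg (Finset.filter_subset _ _) fun x _ _ => hV x)

theorem measureReal_exists_mul_lt_seg_le {V : BStr → ℝ} (hV : 0 ≤ V) {C K : ℝ}
    (hC : ∀ n, ∑ x ∈ words n, V x ≤ C) (hK : 0 < K) :
    ρ.real {Z | ∃ n : ℕ, K * ((n + 1) * (n + 2)) * ρ.real (cyl (seg Z n)) < V (seg Z n)} ≤
      C / K := by
  have hC0 : 0 ≤ C := (Finset.sum_nonneg fun x _ => hV x).trans (hC 0)
  rw [Set.ofPred_exists]
  refine measureReal_iUnion_le_of_le_div (by positivity) fun n => ?_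
  refine (measureReal_mul_lt_seg_le hV (by positivity)).trans ?_
  rw [div_div]
  gcongr
  exact hC n

end UnionBound

theorem eventually_mul_le_two_rpow (K : ℝ) {c : ℝ} (hc : 0 < c) :
    ∀ᶠ n : ℕ in atTop, K * ((n + 1) * (n + 2)) ≤ (2 : ℝ) ^ (c * n) := by
  have hbase : (1 : ℝ) < 2 ^ c := Real.one_lt_rpow one_lt_two hc
  have hsq := (isLittleO_pow_const_const_pow_of_one_lt (R := ℝ) 2 hbase).def
    (c := (6 * (|K| + 1))⁻¹) (by positivity)
  filter_upwards [hsq, eventually_ge_atTop 1] with n hn hn1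
  have hn1' : (1 : ℝ) ≤ n := Nat.one_le_cast.2 hn1
  rw [Real.norm_of_nonneg (by positivity), Real.norm_of_nonneg (by positivity), inv_mul_eq_div,
    le_div_iff₀ (by positivity), ← Real.rpow_natCast _ n, ← Real.rpow_mul two_pos.le] at hn
  calc K * ((n + 1) * (n + 2)) ≤ (|K| + 1) * (6 * (n : ℝ) ^ 2) :=
        mul_le_mul ((le_abs_self K).trans (by linarith)) (by nlinarith) (by positivity)
          (by positivity)
    _ ≤ (2 : ℝ) ^ (c * n) := by linarith

theorem exists_computable_rate {r r' : ℝ} (hr : 0 ≤ r) (hrr' : r < r') :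
    ∃ t : ℕ → ℕ, Computable t ∧ ∀ᶠ n : ℕ in atTop, r * n ≤ t n ∧ t n ≤ r' * n := by
  obtain ⟨q, hrq, hqr'⟩ := exists_rat_btwn hrr'
  have hq : 0 < q := by exact_mod_cast hr.trans_lt hrq
  lift q to ℚ≥0 using hq.le
  have hden : (0 : ℝ) < q.den := Nat.cast_pos.2 q.den_pos
  have hq' : (((q : ℚ≥0) : ℚ) : ℝ) = q.num / q.den := by
    conv_lhs => rw [← NNRat.num_div_den q]
    push_cast
    rfl
  refine ⟨fun n => q.num * n / q.den, ?_, ?_⟩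
  · exact Primrec.nat_div.to_comp.comp (Primrec.nat_mul.to_comp.comp (.const _) .id) (.const _)
  rw [hq'] at hrq hqr'
  obtain ⟨N, hN⟩ := exists_nat_gt (1 / ((q.num / q.den : ℝ) - r))
  filter_upwards [eventually_ge_atTop N] with n hn
  have hn' : 1 / ((q.num / q.den : ℝ) - r) ≤ n := hN.le.trans (Nat.cast_le.2 hn)
  rw [div_le_iff₀ (sub_pos.2 hrq)] at hn'
  have hfloor : ((q.num * n / q.den : ℕ) : ℝ) = ⌊(q.num / q.den : ℝ) * n⌋₊ := by
    rw [← Nat.floor_div_eq_div (K := ℝ), Nat.cast_mul, div_mul_eq_mul_div]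
  rw [hfloor]
  constructor
  · linarith [Nat.lt_floor_add_one ((q.num / q.den : ℝ) * n)]
  · exact (Nat.floor_le (by positivity)).trans (by gcongr)

variable {μ ρ : Measure Cantor} [IsProbabilityMeasure ρ]

theorem MLAC.ae_exists_forall_le_mul (hμ : MLAC μ ρ) (hρ : ComputableMeasure ρ) {V : BStr → ℝ}
    (hV : ComputableReals V) (hV0 : 0 ≤ V) {C : ℝ} (hC : ∀ n, ∑ x ∈ words n, V x ≤ C) :
    ∀ᵐ Z ∂μ, ∃ K : ℝ, ∀ n : ℕ,
      V (seg Z n) ≤ K * ((n + 1) * (n + 2)) * ρ.real (cyl (seg Z n)) := by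
  obtain ⟨c, hc⟩ := exists_nat_gt C
  have hC0 : 0 ≤ C := (Finset.sum_nonneg fun x _ => hV0 x).trans (hC 0)
  have hc0 : (0 : ℝ) < c := hC0.trans_lt hc
  let K : ℕ → BStr → ℕ := fun m x => c * 2 ^ m * ((x.length + 1) * (x.length + 2))
  have hK : Computable fun p : ℕ × BStr => K p.1 p.2 := by
    have hlen : Computable fun p : ℕ × BStr => p.2.length := Computable.list_length.comp .snd
    exact Primrec.nat_mul.to_comp.comp
      (Primrec.nat_mul.to_comp.comp (.const c) (primrec_pow.to_comp.comp (.const 2) .fst))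
      (Primrec.nat_mul.to_comp.comp (Computable.succ.comp hlen)
        (Primrec.nat_add.to_comp.comp hlen (.const 2)))
  have hKcast : ∀ m n (Z : Cantor),
      (K m (seg Z n) : ℝ) = c * 2 ^ m * (((n : ℝ) + 1) * (n + 2)) := fun m n Z => by
    simp only [K, length_seg]
    push_cast
    ring
  have hR : REPred fun p : ℕ × BStr => (K p.1 p.2 : ℝ) * ρ.real (cyl p.2) < V p.2 :=
    ((hρ.computableReals_cyl.comp .snd).natCast_mul hK).rePred_lt (hV.comp .snd)
  have hle : ∀ m, ρ.real {Z | ∃ n, (K m (seg Z n) : ℝ) * ρ.real (cyl (seg Z n)) < V (seg Z n)} ≤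
      2⁻¹ ^ m := by
    intro m
    simp only [hKcast]
    refine (measureReal_exists_mul_lt_seg_le hV0 hC (by positivity)).trans ?_
    rw [inv_pow, ← one_div, div_le_div_iff₀ (by positivity) (by positivity), one_mul]
    gcongr
  filter_upwards [hμ.ae_exists_forall_not hρ (R := fun m x => (K m x : ℝ) * ρ.real (cyl x) < V x)
    hR hle] with Z ⟨m, hm⟩
  refine ⟨c * 2 ^ m, fun n => ?_⟩
  rw [← hKcast]
  exact not_lt.1 (hm n)

theorem sum_measureReal_cyl_drop_le (k n : ℕ) :
    ∑ x ∈ words n, ρ.real (cyl (x.drop k)) ≤ 2 ^ k := by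
  obtain hnk | ⟨m, rfl⟩ := (le_or_gt n k).imp_right fun h => Nat.exists_eq_add_of_le h.le
  · calc ∑ x ∈ words n, ρ.real (cyl (x.drop k)) ≤ ∑ _x ∈ words n, 1 :=
          Finset.sum_le_sum fun _ _ => measureReal_le_one
      _ = 2 ^ n := by rw [Finset.sum_const, card_words, nsmul_one, Nat.cast_pow, Nat.cast_ofNat]
      _ ≤ 2 ^ k := pow_le_pow_right₀ one_le_two hnk
  · refine le_of_eq ?_
    rw [sum_words_add, ← Nat.cast_ofNat, ← Nat.cast_pow, ← card_words, ← nsmul_one,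
      ← Finset.sum_const]
    refine Finset.sum_congr rfl fun w hw => ?_
    simp only [List.drop_left' (mem_words.1 hw), sum_measureReal_cyl]

theorem MLAC.ae_exists_forall_cyl_iterate_shift_le (hμ : MLAC μ ρ) (hρ : ComputableMeasure ρ)
    (k : ℕ) : ∀ᵐ Z ∂μ, ∃ K : ℝ, ∀ n : ℕ, ρ.real (cyl (seg (shift^[k] Z) n)) ≤
      K * (((k + n : ℕ) + 1) * ((k + n : ℕ) + 2)) * ρ.real (cyl (seg Z (k + n))) := by
  have hV : ComputableReals fun x : BStr => ρ.real (cyl (x.drop k)) :=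
    hρ.computableReals_cyl.comp (Primrec.list_drop.to_comp.comp (.const k) .id)
  filter_upwards [hμ.ae_exists_forall_le_mul hρ hV (fun _ => measureReal_nonneg)
    (sum_measureReal_cyl_drop_le k)] with Z ⟨K, hK⟩
  refine ⟨K, fun n => ?_⟩
  have hKn := hK (k + n)
  rwa [drop_seg, Nat.add_sub_cancel_left] at hKn

theorem eventually_atTop_of_add_left {p : ℕ → Prop} {k : ℕ} (h : ∀ᶠ n in atTop, p (k + n)) :
    ∀ᶠ n in atTop, p n := by
  rw [← map_add_atTop_eq_nat k, eventually_map]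
  simpa only [add_comm] using h

theorem two_rpow_neg_natCast_lt_iff {t : ℕ} {a : ℝ} :
    (2 : ℝ) ^ (-(t : ℝ)) < a ↔ ((1 : ℕ) : ℝ) < ((2 ^ t : ℕ) : ℝ) * a := by
  push_cast
  rw [Real.rpow_neg two_pos.le, Real.rpow_natCast, inv_lt_iff_one_lt_mul₀' (by positivity)]

theorem lt_two_rpow_neg_natCast_iff {t : ℕ} {a : ℝ} :
    a < (2 : ℝ) ^ (-(t : ℝ)) ↔ ((2 ^ t : ℕ) : ℝ) * a < ((1 : ℕ) : ℝ) := by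
  push_cast
  rw [Real.rpow_neg two_pos.le, Real.rpow_natCast, ← one_div, lt_div_iff₀' (by positivity)]

theorem MLAC.ae_exists_forall_gt_not_iterate_shift (hμ : MLAC μ ρ) (hρ : ComputableMeasure ρ)
    (herg : Ergodic shift ρ) (hpos : ∀ x, 0 < ρ.real (cyl x)) {p : BStr → Prop} (hp : REPred p)
    {N : ℕ} (hlt : ρ.real {Z | ∃ n > N, p (seg Z n)} < 1) :
    ∀ᵐ Z ∂μ, ∃ k, ∀ n > N, ¬p (seg (shift^[k] Z) n) := by
  have hlong : REPred fun x : BStr => N < x.length ∧ p x :=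
    rePred_and (computablePred_lt (.const N) .list_length).to_re hp
  simpa only [length_seg, not_and] using
    hμ.ae_exists_forall_not_iterate_shift hρ herg hpos hlong (by simpa only [length_seg] using hlt)

theorem MLAC.ae_eventually_cyl_le_rpow (hμ : MLAC μ ρ) (hρ : ComputableMeasure ρ)
    (herg : Ergodic shift ρ) (hpos : ∀ x, 0 < ρ.real (cyl x)) {r r' : ℝ} (hr : 0 ≤ r)
    (hrr' : r < r') {N : ℕ}
    (hN : ρ.real {Z | ∃ n ≥ N, (2 : ℝ) ^ (-(r' * n)) < ρ.real (cyl (seg Z n))} < 1) :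
    ∀ᵐ Z ∂μ, ∀ᶠ n : ℕ in atTop, ρ.real (cyl (seg Z n)) ≤ (2 : ℝ) ^ (-(r * n)) := by
  obtain ⟨q, hrq, hqr'⟩ := exists_between hrr'
  obtain ⟨t, ht, htr⟩ := exists_computable_rate (hr.trans hrq.le) hqr'
  obtain ⟨M, hM⟩ := eventually_atTop.1 (htr.and (eventually_ge_atTop N))
  have hp : REPred fun x : BStr => (2 : ℝ) ^ (-(t x.length : ℝ)) < ρ.real (cyl x) := by
    simp only [two_rpow_neg_natCast_lt_iff]
    exact (ComputableReals.natCast (.const 1)).rePred_lt (hρ.computableReals_cyl.natCast_mul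
      (primrec_pow.to_comp.comp (.const 2) (ht.comp .list_length)))
  have hlt : ρ.real {Z | ∃ n > M,
      (2 : ℝ) ^ (-(t (seg Z n).length : ℝ)) < ρ.real (cyl (seg Z n))} < 1 := by
    simp only [length_seg]
    refine (measureReal_mono ?_).trans_lt hN
    rintro Z ⟨n, hn, hlt⟩
    obtain ⟨⟨-, htn⟩, hNn⟩ := hM n hn.le
    exact ⟨n, hNn, (Real.rpow_le_rpow_of_exponent_le one_le_two (neg_le_neg htn)).trans_lt hlt⟩
  filter_upwards [hμ.ae_exists_forall_gt_not_iterate_shift hρ herg hpos hp hlt] with Z ⟨k, hk⟩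
  refine eventually_atTop_of_add_left (k := k) ?_
  filter_upwards [eventually_gt_atTop M, eventually_ge_atTop ⌈r * k / (q - r)⌉₊] with n hMn hkn
  have hkn' : r * k ≤ n * (q - r) := (div_le_iff₀ (sub_pos.2 hrq)).1 (Nat.ceil_le.1 hkn)
  have hn := not_lt.1 (hk n hMn)
  rw [length_seg] at hn
  refine (measureReal_cyl_seg_add_le herg.toMeasurePreserving Z k n).trans (hn.trans ?_)
  refine Real.rpow_le_rpow_of_exponent_le one_le_two (neg_le_neg ?_)
  push_cast
  linarith [(hM n hMn.le).1.1]

theorem MLAC.ae_eventually_rpow_le_cyl (hμ : MLAC μ ρ) (hρ : ComputableMeasure ρ)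
    (herg : Ergodic shift ρ) (hpos : ∀ x, 0 < ρ.real (cyl x)) {r r' : ℝ} (hr : 0 ≤ r)
    (hrr' : r < r') {N : ℕ}
    (hN : ρ.real {Z | ∃ n ≥ N, ρ.real (cyl (seg Z n)) < (2 : ℝ) ^ (-(r * n))} < 1) :
    ∀ᵐ Z ∂μ, ∀ᶠ n : ℕ in atTop, (2 : ℝ) ^ (-(r' * n)) ≤ ρ.real (cyl (seg Z n)) := by
  obtain ⟨q, hrq, hqr'⟩ := exists_between hrr'
  obtain ⟨t, ht, htr⟩ := exists_computable_rate hr hrq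
  obtain ⟨M, hM⟩ := eventually_atTop.1 (htr.and (eventually_ge_atTop N))
  have hp : REPred fun x : BStr => ρ.real (cyl x) < (2 : ℝ) ^ (-(t x.length : ℝ)) := by
    simp only [lt_two_rpow_neg_natCast_iff]
    exact (hρ.computableReals_cyl.natCast_mul (primrec_pow.to_comp.comp (.const 2)
      (ht.comp .list_length))).rePred_lt (ComputableReals.natCast (.const 1))
  have hlt : ρ.real {Z | ∃ n > M,
      ρ.real (cyl (seg Z n)) < (2 : ℝ) ^ (-(t (seg Z n).length : ℝ))} < 1 := by
    simp only [length_seg]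
    refine (measureReal_mono ?_).trans_lt hN
    rintro Z ⟨n, hn, hlt⟩
    obtain ⟨⟨htn, -⟩, hNn⟩ := hM n hn.le
    exact ⟨n, hNn,
      hlt.trans_le (Real.rpow_le_rpow_of_exponent_le one_le_two (neg_le_neg htn))⟩
  filter_upwards [hμ.ae_exists_forall_gt_not_iterate_shift hρ herg hpos hp hlt,
    ae_all_iff.2 (hμ.ae_exists_forall_cyl_iterate_shift_le hρ)] with Z ⟨k, hk⟩ hshift
  obtain ⟨K, hK⟩ := hshift k
  refine eventually_atTop_of_add_left (k := k) ?_
  filter_upwards [eventually_gt_atTop M, (tendsto_add_atTop_nat k).eventually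
    (eventually_mul_le_two_rpow K (sub_pos.2 hqr'))] with n hMn hKn
  rw [add_comm n k] at hKn
  have hn := not_lt.1 (hk n hMn)
  rw [length_seg] at hn
  refine le_of_mul_le_mul_left ?_ (Real.rpow_pos_of_pos two_pos ((r' - q) * (k + n : ℕ)))
  calc (2 : ℝ) ^ ((r' - q) * (k + n : ℕ)) * 2 ^ (-(r' * (k + n : ℕ)))
      = 2 ^ (-(q * (k + n : ℕ))) := by
        rw [← Real.rpow_add two_pos]
        ring_nf
    _ ≤ 2 ^ (-(t n : ℝ)) := by
        refine Real.rpow_le_rpow_of_exponent_le one_le_two (neg_le_neg ?_)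
        push_cast
        nlinarith [(hM n hMn.le).1.2, hr.trans hrq.le, k.cast_nonneg (α := ℝ)]
    _ ≤ ρ.real (cyl (seg (shift^[k] Z) n)) := hn
    _ ≤ K * (((k + n : ℕ) + 1) * ((k + n : ℕ) + 2)) * ρ.real (cyl (seg Z (k + n))) := hK n
    _ ≤ 2 ^ ((r' - q) * (k + n : ℕ)) * ρ.real (cyl (seg Z (k + n))) := by gcongr

end LocalRates

section Packing

/-- The total weight of the factorizations of `x` into at most `k` nonempty blocks, where a
factorization has the product of the weights `b y` of its blocks `y`. -/
noncomputable def parsingWeight (b : BStr → ℝ) : ℕ → BStr → ℝ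
  | 0, x => if x = [] then 1 else 0
  | k + 1, x => (if x = [] then 1 else 0) +
      ∑ n ∈ Finset.Icc 1 x.length, b (x.take n) * parsingWeight b k (x.drop n)

variable {b : BStr → ℝ}

theorem parsingWeight_nil (k : ℕ) : parsingWeight b k [] = 1 := by
  cases k <;> simp [parsingWeight]

theorem parsingWeight_nonneg (hb : 0 ≤ b) (k : ℕ) (x : BStr) : 0 ≤ parsingWeight b k x := by
  induction k generalizing x with
  | zero =>
    rw [parsingWeight]
    positivity
  | succ k ih =>
    rw [parsingWeight]
    exact add_nonneg (by positivity) (Finset.sum_nonneg fun n _ => mul_nonneg (hb _) (ih _))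

theorem mul_parsingWeight_le (hb : 0 ≤ b) (k : ℕ) {y : BStr} (hy : y ≠ []) (z : BStr) :
    b y * parsingWeight b k z ≤ parsingWeight b (k + 1) (y ++ z) := by
  have hmem : y.length ∈ Finset.Icc 1 (y ++ z).length := by
    rw [Finset.mem_Icc, List.length_append]
    exact ⟨List.length_pos_iff.2 hy, Nat.le_add_right _ _⟩
  have hterm := Finset.single_le_sum
    (f := fun n => b ((y ++ z).take n) * parsingWeight b k ((y ++ z).drop n))
    (fun _ _ => mul_nonneg (hb _) (parsingWeight_nonneg hb _ _)) hmem
  rw [List.take_left, List.drop_left] at hterm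
  rw [parsingWeight]
  exact hterm.trans (le_add_of_nonneg_left (by positivity))

theorem le_parsingWeight (hb : 0 ≤ b) {g : ℕ → Cantor → ℝ} (hg0 : ∀ Z, g 0 Z ≤ 1)
    (hg : ∀ L Z, 0 < L → ∃ n m, 0 < n ∧ n + m = L ∧ g L Z ≤ b (seg Z n) * g m (shift^[n] Z))
    {k L : ℕ} (hL : L ≤ k) (Z : Cantor) : g L Z ≤ parsingWeight b k (seg Z L) := by
  induction k generalizing L Z with
  | zero =>
    rw [Nat.le_zero.1 hL, seg_zero, parsingWeight_nil]
    exact hg0 Z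
  | succ k ih =>
    obtain rfl | hLpos := Nat.eq_zero_or_pos L
    · rw [seg_zero, parsingWeight_nil]
      exact hg0 Z
    obtain ⟨n, m, hn, rfl, hle⟩ := hg L Z hLpos
    have hne : seg Z n ≠ [] := List.ne_nil_of_length_pos (by rwa [length_seg])
    calc g (n + m) Z ≤ b (seg Z n) * g m (shift^[n] Z) := hle
      _ ≤ b (seg Z n) * parsingWeight b k (seg (shift^[n] Z) m) :=
          mul_le_mul_of_nonneg_left (ih (by omega) _) (hb _)
      _ ≤ parsingWeight b (k + 1) (seg Z (n + m)) := by
          rw [seg_add]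
          exact mul_parsingWeight_le hb k hne _

theorem sum_words_take_mul_drop {n L : ℕ} (hn : n ≤ L) (f g : BStr → ℝ) :
    ∑ x ∈ words L, f (x.take n) * g (x.drop n) =
      (∑ y ∈ words n, f y) * ∑ z ∈ words (L - n), g z := by
  obtain ⟨m, rfl⟩ := Nat.exists_eq_add_of_le hn
  rw [sum_words_add, Finset.sum_mul_sum, Nat.add_sub_cancel_left]
  refine Finset.sum_congr rfl fun y hy => Finset.sum_congr rfl fun z _ => ?_
  rw [List.take_left' (mem_words.1 hy), List.drop_left' (mem_words.1 hy)]

theorem sum_parsingWeight_le (hb : 0 ≤ b)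
    (hsum : ∀ L, ∑ n ∈ Finset.Icc 1 L, ∑ y ∈ words n, b y ≤ 1) (k L : ℕ) :
    ∑ x ∈ words L, parsingWeight b k x ≤ 1 := by
  have hwords : words 0 = {[]} := by
    ext x
    rw [mem_words, List.length_eq_zero_iff, Finset.mem_singleton]
  induction k generalizing L with
  | zero =>
    simp only [parsingWeight]
    rw [Finset.sum_ite_eq']
    split_ifs <;> norm_num
  | succ k ih =>
    obtain rfl | hL := Nat.eq_zero_or_pos L
    · rw [hwords, Finset.sum_singleton, parsingWeight_nil]
    calc ∑ x ∈ words L, parsingWeight b (k + 1) x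
        = ∑ n ∈ Finset.Icc 1 L, ∑ x ∈ words L, b (x.take n) * parsingWeight b k (x.drop n) := by
          rw [Finset.sum_comm]
          refine Finset.sum_congr rfl fun x hx => ?_
          have hlen := mem_words.1 hx
          rw [parsingWeight, hlen, if_neg (List.ne_nil_of_length_pos (hlen.symm ▸ hL)), zero_add]
      _ ≤ ∑ n ∈ Finset.Icc 1 L, ∑ y ∈ words n, b y := by
          refine Finset.sum_le_sum fun n hn => ?_
          rw [sum_words_take_mul_drop (Finset.mem_Icc.1 hn).2]
          exact mul_le_of_le_one_right (Finset.sum_nonneg fun y _ => hb y) (ih _)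
      _ ≤ 1 := hsum L

variable {ρ : Measure Cantor} {r δ : ℝ} {N₀ M : ℕ}

/-- The block weight used to parse a typical sequence: single letters are always available, and
blocks of length at least `N₀` are discounted so that all weights together sum to at most one. -/
noncomputable def blockWeight (ρ : Measure Cantor) (δ : ℝ) (N₀ : ℕ) (x : BStr) : ℝ :=
  (if x.length = 1 then 1 / 4 else 0) +
    if N₀ ≤ x.length then (2 : ℝ) ^ (-(δ * x.length)) * ρ.real (cyl x) else 0

theorem blockWeight_nonneg : 0 ≤ blockWeight ρ δ N₀ := fun x => by
  simp only [blockWeight, Pi.zero_apply]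
  positivity

theorem one_div_four_le_blockWeight (Z : Cantor) : 1 / 4 ≤ blockWeight ρ δ N₀ (seg Z 1) := by
  rw [blockWeight, length_seg, if_pos rfl]
  exact le_add_of_nonneg_right (by positivity)

theorem mul_measureReal_le_blockWeight {n : ℕ} (hn : N₀ ≤ n) (Z : Cantor) :
    (2 : ℝ) ^ (-(δ * n)) * ρ.real (cyl (seg Z n)) ≤ blockWeight ρ δ N₀ (seg Z n) := by
  rw [blockWeight, length_seg, if_pos hn]
  exact le_add_of_nonneg_left (by positivity)

theorem exists_sum_Ico_rpow_le (hδ : 0 < δ) {ε : ℝ} (hε : 0 < ε) :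
    ∃ N : ℕ, ∀ L, ∑ n ∈ Finset.Ico N L, (2 : ℝ) ^ (-(δ * n)) ≤ ε := by
  have hbase0 : (0 : ℝ) ≤ 2 ^ (-δ) := by positivity
  have hbase1 : (2 : ℝ) ^ (-δ) < 1 :=
    Real.rpow_lt_one_of_one_lt_of_neg one_lt_two (neg_lt_zero.2 hδ)
  obtain ⟨N, hN⟩ := exists_pow_lt_of_lt_one (mul_pos hε (sub_pos.2 hbase1)) hbase1
  refine ⟨N, fun L => ?_⟩
  simp only [← neg_mul, Real.rpow_mul two_pos.le, Real.rpow_natCast]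
  exact (geom_sum_Ico_le_of_lt_one hbase0 hbase1).trans
    ((div_le_iff₀ (sub_pos.2 hbase1)).2 hN.le)

theorem sum_words_blockWeight [IsProbabilityMeasure ρ] (n : ℕ) :
    ∑ x ∈ words n, blockWeight ρ δ N₀ x =
      (if n = 1 then 1 / 2 else 0) + if N₀ ≤ n then (2 : ℝ) ^ (-(δ * n)) else 0 := by
  have hlength : ∀ x ∈ words n, blockWeight ρ δ N₀ x = (if n = 1 then 1 / 4 else 0) +
      (if N₀ ≤ n then (2 : ℝ) ^ (-(δ * n)) else 0) * ρ.real (cyl x) := fun x hx => by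
    rw [blockWeight, mem_words.1 hx, ite_zero_mul]
  rw [Finset.sum_congr rfl hlength, Finset.sum_add_distrib, ← Finset.mul_sum,
    sum_measureReal_cyl, mul_one, Finset.sum_const, card_words]
  split_ifs with h1 <;> norm_num [h1]

theorem exists_sum_blockWeight_le [IsProbabilityMeasure ρ] (hδ : 0 < δ) :
    ∃ N₀, ∀ L, ∑ n ∈ Finset.Icc 1 L, ∑ x ∈ words n, blockWeight ρ δ N₀ x ≤ 1 := by
  obtain ⟨N₀, hN₀⟩ := exists_sum_Ico_rpow_le hδ one_half_pos
  refine ⟨N₀, fun L => ?_⟩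
  simp only [sum_words_blockWeight, Finset.sum_add_distrib]
  have hletter : ∑ n ∈ Finset.Icc 1 L, (if n = 1 then 1 / 2 else 0 : ℝ) ≤ 1 / 2 := by
    rw [Finset.sum_ite_eq']
    split_ifs <;> norm_num
  have hblock : ∑ n ∈ Finset.Icc 1 L, (if N₀ ≤ n then (2 : ℝ) ^ (-(δ * n)) else 0) ≤ 1 / 2 := by
    rw [← Finset.sum_filter]
    refine (Finset.sum_le_sum_of_subset_of_nonneg (fun n hn => ?_)
      fun _ _ _ => by positivity).trans (hN₀ (L + 1))
    simp only [Finset.mem_filter, Finset.mem_Icc, Finset.mem_Ico] at hn ⊢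
    omega
  linarith

/-- The sequences all of whose initial segments with length between `N₀` and `M` have measure at
most `2 ^ (-(r * n))`, where `n` is the length. -/
def noHeavyPrefix (ρ : Measure Cantor) (r : ℝ) (N₀ M : ℕ) : Set Cantor :=
  {Z | ∀ n, N₀ ≤ n → n ≤ M → ρ.real (cyl (seg Z n)) ≤ (2 : ℝ) ^ (-(r * n))}

theorem measurableSet_noHeavyPrefix : MeasurableSet (noHeavyPrefix ρ r N₀ M) := by
  simp only [noHeavyPrefix, Set.ofPred_forall]
  exact .iInter fun n => .iInter fun _ => .iInter fun _ =>
    measurableSet_seg (fun x => ρ.real (cyl x) ≤ (2 : ℝ) ^ (-(r * n))) n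

theorem exists_measureReal_noHeavyPrefix_lt [IsFiniteMeasure ρ]
    (hio : ∀ᵐ Z ∂ρ, ∃ᶠ n : ℕ in atTop, (2 : ℝ) ^ (-(r * n)) < ρ.real (cyl (seg Z n)))
    (N₀ : ℕ) {ε : ℝ} (hε : 0 < ε) : ∃ M, ρ.real (noHeavyPrefix ρ r N₀ M) < ε := by
  have hanti : Antitone (noHeavyPrefix ρ r N₀) := fun _ _ hij _ hZ n hn hni =>
    hZ n hn (hni.trans hij)
  have hnull : ρ (⋂ M, noHeavyPrefix ρ r N₀ M) = 0 := by
    refine measure_mono_null ?_ (ae_iff.1 hio)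
    intro Z hZ hfreq
    obtain ⟨n, hlt, hn⟩ := (hfreq.and_eventually (eventually_ge_atTop N₀)).exists
    exact (Set.mem_iInter.1 hZ n n hn le_rfl).not_gt hlt
  have hlim := tendsto_measure_iInter_atTop (μ := ρ)
    (fun _ => measurableSet_noHeavyPrefix.nullMeasurableSet) hanti ⟨0, measure_ne_top _ _⟩
  rw [hnull] at hlim
  exact (((ENNReal.tendsto_toReal ENNReal.zero_ne_top).comp hlim).eventually_lt_const hε).exists

/-- A lower bound for the weight of the greedy parsing of the first `L` bits of `Z`: a heavy block
costs `r + δ` per bit, and single letters are read off at the visits to `noHeavyPrefix` and within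
the last `M` positions. -/
noncomputable def greedyBound (ρ : Measure Cantor) (r δ : ℝ) (N₀ M L : ℕ) (Z : Cantor) : ℝ :=
  2 ^ (-((r + δ) * L + 2 * birkhoffSum shift ((noHeavyPrefix ρ r N₀ M).indicator 1) L Z +
    2 * (min L M : ℕ)))

theorem greedyBound_letter (hrδ : 0 ≤ r + δ) {L : ℕ} {Z : Cantor}
    (h : Z ∈ noHeavyPrefix ρ r N₀ M ∨ L < M) :
    greedyBound ρ r δ N₀ M (1 + L) Z ≤
      blockWeight ρ δ N₀ (seg Z 1) * greedyBound ρ r δ N₀ M L (shift^[1] Z) := by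
  set C := noHeavyPrefix ρ r N₀ M
  have hstep : 1 + (min L M : ℕ) ≤ C.indicator (1 : Cantor → ℝ) Z + (min (1 + L) M : ℕ) := by
    obtain hZ | hLM := h
    · rw [Set.indicator_of_mem hZ, Pi.one_apply]
      gcongr
      exact Nat.le_add_left _ _
    · rw [min_eq_left hLM.le, min_eq_left (by omega), Nat.cast_add, Nat.cast_one]
      exact le_add_of_nonneg_left (indicator_one_nonneg C Z)
  calc greedyBound ρ r δ N₀ M (1 + L) Z
      ≤ 2 ^ (-2 : ℝ) * greedyBound ρ r δ N₀ M L (shift^[1] Z) := by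
        rw [greedyBound, greedyBound, ← Real.rpow_add two_pos, birkhoffSum_add, birkhoffSum_one]
        refine Real.rpow_le_rpow_of_exponent_le one_le_two ?_
        push_cast at hstep ⊢
        linarith
    _ ≤ blockWeight ρ δ N₀ (seg Z 1) * greedyBound ρ r δ N₀ M L (shift^[1] Z) := by
        refine mul_le_mul_of_nonneg_right (le_trans ?_ (one_div_four_le_blockWeight Z))
          (Real.rpow_nonneg two_pos.le _)
        norm_num [Real.rpow_neg]

theorem greedyBound_block {n m : ℕ} {Z : Cantor} (hn : N₀ ≤ n)
    (hheavy : (2 : ℝ) ^ (-(r * n)) ≤ ρ.real (cyl (seg Z n))) :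
    greedyBound ρ r δ N₀ M (n + m) Z ≤
      blockWeight ρ δ N₀ (seg Z n) * greedyBound ρ r δ N₀ M m (shift^[n] Z) := by
  set C := noHeavyPrefix ρ r N₀ M
  have hvisits : 0 ≤ birkhoffSum shift (C.indicator (1 : Cantor → ℝ)) n Z :=
    Finset.sum_nonneg fun _ _ => indicator_one_nonneg C _
  have hmin : ((min m M : ℕ) : ℝ) ≤ (min (n + m) M : ℕ) := by
    gcongr
    exact Nat.le_add_left _ _
  calc greedyBound ρ r δ N₀ M (n + m) Z
      ≤ 2 ^ (-(δ * n)) * 2 ^ (-(r * n)) * greedyBound ρ r δ N₀ M m (shift^[n] Z) := by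
        rw [greedyBound, greedyBound, ← Real.rpow_add two_pos, ← Real.rpow_add two_pos,
          birkhoffSum_add]
        refine Real.rpow_le_rpow_of_exponent_le one_le_two ?_
        push_cast at hmin ⊢
        linarith
    _ ≤ blockWeight ρ δ N₀ (seg Z n) * greedyBound ρ r δ N₀ M m (shift^[n] Z) := by
        refine mul_le_mul_of_nonneg_right (le_trans ?_ (mul_measureReal_le_blockWeight hn Z))
          (Real.rpow_nonneg two_pos.le _)
        gcongr

theorem greedyBound_le_parsingWeight [IsProbabilityMeasure ρ] (hrδ : 0 ≤ r + δ) (L : ℕ)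
    (Z : Cantor) :
    greedyBound ρ r δ N₀ M L Z ≤ parsingWeight (blockWeight ρ δ N₀) L (seg Z L) := by
  refine le_parsingWeight blockWeight_nonneg (fun Z => by simp [greedyBound])
    (fun L Z hL => ?_) le_rfl Z
  by_cases hletter : Z ∈ noHeavyPrefix ρ r N₀ M ∨ L - 1 < M
  · refine ⟨1, L - 1, one_pos, by omega, ?_⟩
    conv_lhs => rw [← Nat.add_sub_cancel' (Nat.succ_le_of_lt hL)]
    exact greedyBound_letter hrδ hletter
  · obtain ⟨hZ, hLM⟩ := not_or.1 hletter
    simp only [noHeavyPrefix, Set.mem_ofPred_eq] at hZ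
    push Not at hZ
    obtain ⟨n, hn, hnM, hheavy⟩ := hZ
    obtain ⟨m, rfl⟩ := Nat.exists_eq_add_of_le (show n ≤ L by omega)
    refine ⟨n, m, Nat.pos_of_ne_zero fun h0 => ?_, rfl, greedyBound_block hn hheavy.le⟩
    rw [h0, Nat.cast_zero, mul_zero, neg_zero, Real.rpow_zero] at hheavy
    exact measureReal_le_one.not_gt hheavy

theorem exists_forall_rpow_le_of_greedyBound_le [IsFiniteMeasure ρ] (hδ : 0 < δ) (M : ℕ) :
    ∃ N : ℕ, ∀ n ≥ N, ∀ Z,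
      birkhoffSum shift ((noHeavyPrefix ρ r N₀ M).indicator 1) n Z ≤ δ * n →
      greedyBound ρ r δ N₀ M n Z ≤ 4 * ((n + 1) * (n + 2)) * ρ.real (cyl (seg Z n)) →
      (2 : ℝ) ^ (-((r + 4 * δ) * n)) ≤ ρ.real (cyl (seg Z n)) := by
  obtain ⟨N, hN⟩ := eventually_atTop.1
    (eventually_mul_le_two_rpow ((2 : ℝ) ^ (2 * M : ℝ) * 4) hδ)
  refine ⟨N, fun n hn Z hvisits hbound => ?_⟩
  have hmin : ((min n M : ℕ) : ℝ) ≤ M := Nat.cast_le.2 (min_le_right n M)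
  refine le_of_mul_le_mul_left ?_ (Real.rpow_pos_of_pos two_pos (δ * n))
  calc (2 : ℝ) ^ (δ * n) * 2 ^ (-((r + 4 * δ) * n))
      ≤ 2 ^ (2 * M : ℝ) * greedyBound ρ r δ N₀ M n Z := by
        rw [greedyBound, ← Real.rpow_add two_pos, ← Real.rpow_add two_pos]
        exact Real.rpow_le_rpow_of_exponent_le one_le_two (by linarith)
    _ ≤ 2 ^ (2 * M : ℝ) * (4 * ((n + 1) * (n + 2)) * ρ.real (cyl (seg Z n))) := by gcongr
    _ = 2 ^ (2 * M : ℝ) * 4 * ((n + 1) * (n + 2)) * ρ.real (cyl (seg Z n)) := by ring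
    _ ≤ 2 ^ (δ * n) * ρ.real (cyl (seg Z n)) := by
        gcongr
        exact hN n hn

theorem exists_measureReal_exists_cyl_lt_rpow_lt_one [IsProbabilityMeasure ρ]
    (hT : MeasurePreserving shift ρ ρ) (hr : 0 ≤ r) {r' : ℝ} (hrr' : r < r')
    (hio : ∀ᵐ Z ∂ρ, ∃ᶠ n : ℕ in atTop, (2 : ℝ) ^ (-(r * n)) < ρ.real (cyl (seg Z n))) :
    ∃ N, ρ.real {Z | ∃ n ≥ N, ρ.real (cyl (seg Z n)) < (2 : ℝ) ^ (-(r' * n))} < 1 := by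
  obtain ⟨δ, hδ, rfl⟩ : ∃ δ > 0, r' = r + 4 * δ := ⟨(r' - r) / 4, by linarith, by ring⟩
  obtain ⟨N₀, hN₀⟩ := exists_sum_blockWeight_le (ρ := ρ) hδ
  obtain ⟨M, hM⟩ := exists_measureReal_noHeavyPrefix_lt hio N₀ (half_pos hδ)
  obtain ⟨N, hN⟩ := exists_forall_rpow_le_of_greedyBound_le (ρ := ρ) (r := r) (N₀ := N₀) hδ M
  set C := noHeavyPrefix ρ r N₀ M
  let V : BStr → ℝ := fun x => parsingWeight (blockWeight ρ δ N₀) x.length x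
  have hvisits : ρ.real {Z | ∃ n : ℕ, δ * n < birkhoffSum shift (C.indicator 1) n Z} ≤ 1 / 2 := by
    refine (measureReal_exists_lt_birkhoffSum_le hT
      ((integrable_const 1).indicator measurableSet_noHeavyPrefix) (indicator_one_nonneg C)
      hδ).trans ?_
    rw [integral_indicator_one measurableSet_noHeavyPrefix, div_le_iff₀ hδ]
    linarith
  have hV0 : 0 ≤ V := fun x => parsingWeight_nonneg blockWeight_nonneg _ x
  have hV1 : ∀ n, ∑ x ∈ words n, V x ≤ 1 := fun n => by
    rw [Finset.sum_congr rfl fun x hx => show V x = parsingWeight _ n x by rw [← mem_words.1 hx]]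
    exact sum_parsingWeight_le blockWeight_nonneg hN₀ n n
  have hweight := measureReal_exists_mul_lt_seg_le (ρ := ρ) hV0 hV1 (K := 4) four_pos
  have hsub : {Z | ∃ n ≥ N, ρ.real (cyl (seg Z n)) < (2 : ℝ) ^ (-((r + 4 * δ) * n))} ⊆
      {Z | ∃ n : ℕ, δ * n < birkhoffSum shift (C.indicator 1) n Z} ∪
        {Z | ∃ n : ℕ, 4 * ((n + 1) * (n + 2)) * ρ.real (cyl (seg Z n)) < V (seg Z n)} := by
    rintro Z ⟨n, hn, hlt⟩
    by_contra hZ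
    simp only [Set.mem_union, Set.mem_ofPred_eq, not_or, not_exists, not_lt] at hZ
    obtain ⟨hvisitsZ, hweightZ⟩ := hZ
    have hV := hweightZ n
    simp only [V, length_seg] at hV
    exact hlt.not_ge (hN n hn Z (hvisitsZ n)
      ((greedyBound_le_parsingWeight (by linarith) n Z).trans hV))
  exact ⟨N, (measureReal_mono hsub).trans_lt ((measureReal_union_le _ _).trans_lt (by linarith))⟩

end Packing

section Entropy

theorem le_of_tendsto_integral_of_ae_eventually_le {α : Type*} [MeasurableSpace α]
    {μ : Measure α} [IsProbabilityMeasure μ] {f : ℕ → α → ℝ} {B r s : ℝ}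
    (hf : ∀ n, Measurable (f n)) (hB : ∀ n x, |f n x| ≤ B)
    (hle : ∀ᵐ x ∂μ, ∀ᶠ n in atTop, f n x ≤ r)
    (hlim : Tendsto (fun n => ∫ x, f n x ∂μ) atTop (nhds s)) : s ≤ r := by
  have hmax : ∀ n, Measurable fun x => max (f n x) r := fun n => (hf n).max measurable_const
  have hmaxB : ∀ n x, ‖max (f n x) r‖ ≤ max B |r| := fun n x =>
    (abs_max_le_max_abs_abs).trans (max_le_max_right _ (hB n x))
  have hlim' : Tendsto (fun n => ∫ x, max (f n x) r ∂μ) atTop (nhds (∫ _, r ∂μ)) := by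
    refine tendsto_integral_of_dominated_convergence (fun _ => max B |r|)
      (fun n => (hmax n).aestronglyMeasurable) (integrable_const _)
      (fun n => ae_of_all _ (hmaxB n)) (hle.mono fun x hx => ?_)
    exact tendsto_const_nhds.congr' (hx.mono fun n hn => (max_eq_right hn).symm)
  rw [integral_const, probReal_univ, one_smul] at hlim'
  refine le_of_tendsto_of_tendsto' hlim hlim' fun n => ?_
  exact integral_mono
    (.of_bound (hf n).aestronglyMeasurable B (ae_of_all _ (hB n)))
    (.of_bound (hmax n).aestronglyMeasurable _ (ae_of_all _ (hmaxB n))) fun x => le_max_left _ _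

variable {ρ μ : Measure Cantor} {n : ℕ} {Z : Cantor} {r r' D s : ℝ}

theorem empEntropy_eq_div : empEntropy ρ n Z = -Real.logb 2 (ρ.real (cyl (seg Z n))) / n := by
  rw [empEntropy, measureReal_def]
  ring

theorem empEntropy_le_iff (hn : 0 < n) (hpos : 0 < ρ.real (cyl (seg Z n))) :
    empEntropy ρ n Z ≤ r ↔ (2 : ℝ) ^ (-(r * n)) ≤ ρ.real (cyl (seg Z n)) := by
  rw [empEntropy_eq_div, div_le_iff₀ (Nat.cast_pos.2 hn), neg_le,
    Real.le_logb_iff_rpow_le one_lt_two hpos]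

theorem le_empEntropy_iff (hn : 0 < n) (hpos : 0 < ρ.real (cyl (seg Z n))) :
    r ≤ empEntropy ρ n Z ↔ ρ.real (cyl (seg Z n)) ≤ (2 : ℝ) ^ (-(r * n)) := by
  rw [empEntropy_eq_div, le_div_iff₀ (Nat.cast_pos.2 hn), le_neg,
    Real.logb_le_iff_le_rpow one_lt_two hpos]

theorem measurable_empEntropy (n : ℕ) : Measurable (empEntropy ρ n) :=
  measurable_seg_comp (fun x => -(1 / (n : ℝ)) * Real.logb 2 (ρ (cyl x)).toReal) n

theorem integral_empEntropy [IsFiniteMeasure ρ] (n : ℕ) :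
    ∫ Z, empEntropy ρ n Z ∂ρ = entropyAt ρ n := by
  simp only [empEntropy, entropyAt]
  rw [integral_const_mul, integral_seg_comp n fun x => Real.logb 2 (ρ (cyl x)).toReal,
    ← sum_ofFn_eq_sum_words]
  rfl

variable [IsProbabilityMeasure ρ]

theorem empEntropy_nonneg (n : ℕ) (Z : Cantor) : 0 ≤ empEntropy ρ n Z := by
  rw [empEntropy_eq_div]
  exact div_nonneg (neg_nonneg.2
    (Real.logb_nonpos one_lt_two measureReal_nonneg measureReal_le_one)) n.cast_nonneg

theorem abs_empEntropy_le (hD : ∀ x, (2 : ℝ) ^ (-(D * x.length)) ≤ ρ.real (cyl x)) (n : ℕ)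
    (Z : Cantor) : |empEntropy ρ n Z| ≤ |D| := by
  rw [abs_of_nonneg (empEntropy_nonneg n Z)]
  obtain rfl | hn := Nat.eq_zero_or_pos n
  · simp [empEntropy]
  · have hDZ := hD (seg Z n)
    have hpos := (Real.rpow_pos_of_pos two_pos _).trans_le hDZ
    rw [length_seg] at hDZ
    exact ((empEntropy_le_iff hn hpos).2 hDZ).trans (le_abs_self D)

theorem ae_frequently_of_one_le_measureReal {p : ℕ → BStr → Prop}
    (h : ∀ N, 1 ≤ ρ.real {Z | ∃ n ≥ N, p n (seg Z n)}) :
    ∀ᵐ Z ∂ρ, ∃ᶠ n in atTop, p n (seg Z n) := by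
  simp only [frequently_atTop]
  refine ae_all_iff.2 fun N => ?_
  have hmeas : MeasurableSet {Z | ∃ n ≥ N, p n (seg Z n)} := by
    rw [Set.ofPred_exists]
    exact .iUnion fun n => measurableSet_seg (fun x => N ≤ n ∧ p n x) n
  have hone : ρ.real {Z | ∃ n ≥ N, p n (seg Z n)} = 1 := measureReal_le_one.antisymm (h N)
  exact (mem_ae_iff_prob_eq_one hmeas).2 ((ENNReal.toReal_eq_one_iff _).1 hone)

-- The alternative is uniform in `μ`, so that testing it on `μ = ρ` decides it for every `μ`.
theorem forall_le_empEntropy_or_forall_empEntropy_le (hρ : ComputableMeasure ρ)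
    (herg : Ergodic shift ρ) (hpos : ∀ x, 0 < ρ.real (cyl x)) (hr : 0 ≤ r) (hrr' : r < r') :
    (∀ μ, MLAC μ ρ → ∀ᵐ Z ∂μ, ∀ᶠ n in atTop, r ≤ empEntropy ρ n Z) ∨
      ∀ μ, MLAC μ ρ → ∀ᵐ Z ∂μ, ∀ᶠ n in atTop, empEntropy ρ n Z ≤ r' := by
  obtain ⟨p, hrp, hpr'⟩ := exists_between hrr'
  obtain ⟨q, hpq, hqr'⟩ := exists_between hpr'
  have hp : 0 ≤ p := hr.trans hrp.le
  by_cases hlight :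
      ∃ N : ℕ, ρ.real {Z | ∃ n ≥ N, (2 : ℝ) ^ (-(p * n)) < ρ.real (cyl (seg Z n))} < 1
  · obtain ⟨N, hN⟩ := hlight
    refine .inl fun μ hμ => (hμ.ae_eventually_cyl_le_rpow hρ herg hpos hr hrp hN).mono
      fun Z hZ => ?_
    filter_upwards [hZ, eventually_gt_atTop 0] with n hn hn0
    exact (le_empEntropy_iff hn0 (hpos _)).2 hn
  · push Not at hlight
    obtain ⟨N, hN⟩ := exists_measureReal_exists_cyl_lt_rpow_lt_one herg.toMeasurePreserving hp hpq
      (ae_frequently_of_one_le_measureReal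
        (p := fun n x => (2 : ℝ) ^ (-(p * n)) < ρ.real (cyl x)) hlight)
    refine .inr fun μ hμ => (hμ.ae_eventually_rpow_le_cyl hρ herg hpos (hp.trans hpq.le) hqr'
      hN).mono fun Z hZ => ?_
    filter_upwards [hZ, eventually_gt_atTop 0] with n hn hn0
    exact (empEntropy_le_iff hn0 (hpos _)).2 hn

theorem le_of_ae_eventually_empEntropy_le
    (hD : ∀ x, (2 : ℝ) ^ (-(D * x.length)) ≤ ρ.real (cyl x))
    (hs : Tendsto (entropyAt ρ) atTop (nhds s))
    (hr : ∀ᵐ Z ∂ρ, ∀ᶠ n in atTop, empEntropy ρ n Z ≤ r) : s ≤ r :=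
  le_of_tendsto_integral_of_ae_eventually_le measurable_empEntropy (abs_empEntropy_le hD) hr
    (by simpa only [integral_empEntropy] using hs)

theorem le_of_ae_eventually_le_empEntropy
    (hD : ∀ x, (2 : ℝ) ^ (-(D * x.length)) ≤ ρ.real (cyl x))
    (hs : Tendsto (entropyAt ρ) atTop (nhds s))
    (hr : ∀ᵐ Z ∂ρ, ∀ᶠ n in atTop, r ≤ empEntropy ρ n Z) : r ≤ s := by
  refine neg_le_neg_iff.1 (le_of_tendsto_integral_of_ae_eventually_le
    (f := fun n Z => -empEntropy ρ n Z) (fun n => (measurable_empEntropy n).neg)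
    (fun n Z => (abs_neg _).trans_le (abs_empEntropy_le hD n Z))
    (hr.mono fun Z hZ => hZ.mono fun n => neg_le_neg) ?_)
  simpa only [integral_neg, integral_empEntropy] using hs.neg

theorem MLAC.ae_tendsto_empEntropy (hμ : MLAC μ ρ) (hρ : ComputableMeasure ρ)
    (herg : Ergodic shift ρ) (hD : ∀ x, (2 : ℝ) ^ (-(D * x.length)) ≤ ρ.real (cyl x))
    (hs : Tendsto (entropyAt ρ) atTop (nhds s)) :
    ∀ᵐ Z ∂μ, Tendsto (empEntropy ρ · Z) atTop (nhds s) := by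
  have hpos : ∀ x, 0 < ρ.real (cyl x) := fun x =>
    (Real.rpow_pos_of_pos two_pos _).trans_le (hD x)
  have hs0 : 0 ≤ s := le_of_ae_eventually_le_empEntropy hD hs
    (ae_of_all _ fun Z => .of_forall fun n => empEntropy_nonneg n Z)
  have hlower : ∀ᵐ Z ∂μ, ∀ q : ℚ, (q : ℝ) < s → ∀ᶠ n in atTop, q ≤ empEntropy ρ n Z := by
    refine ae_all_iff.2 fun q => eventually_imp_distrib_left.2 fun hq => ?_
    obtain hq0 | hq0 := lt_or_ge (q : ℝ) 0
    · exact ae_of_all _ fun Z => .of_forall fun n => hq0.le.trans (empEntropy_nonneg n Z)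
    obtain ⟨r, hqr, hrs⟩ := exists_between hq
    refine (forall_le_empEntropy_or_forall_empEntropy_le hρ herg hpos hq0 hqr).elim
      (fun h => h μ hμ) fun h => absurd hrs ?_
    exact (le_of_ae_eventually_empEntropy_le hD hs (h ρ (.refl ρ))).not_gt
  have hupper : ∀ᵐ Z ∂μ, ∀ q : ℚ, s < q → ∀ᶠ n in atTop, empEntropy ρ n Z ≤ q := by
    refine ae_all_iff.2 fun q => eventually_imp_distrib_left.2 fun hq => ?_
    obtain ⟨r, hsr, hrq⟩ := exists_between hq
    refine (forall_le_empEntropy_or_forall_empEntropy_le hρ herg hpos (hs0.trans hsr.le) hrq).elim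
      (fun h => absurd hsr ?_) fun h => h μ hμ
    exact (le_of_ae_eventually_le_empEntropy hD hs (h ρ (.refl ρ))).not_gt
  filter_upwards [hlower, hupper] with Z hlowerZ hupperZ
  refine tendsto_order.2 ⟨fun a ha => ?_, fun a ha => ?_⟩
  · obtain ⟨q, haq, hqs⟩ := exists_rat_btwn ha
    exact (hlowerZ q hqs).mono fun n => haq.trans_le
  · obtain ⟨q, hsq, hqa⟩ := exists_rat_btwn ha
    exact (hupperZ q hsq).mono fun n hn => hn.trans_lt hqa

end Entropy

/-- for a computable shift-invariant ergodic `ρ` with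
`ρ[x] ≥ 2^{-D·|x|}` for all strings `x` (so the `h_n^ρ` are bounded by `D`),
entropy `H(ρ) = s`, and any `μ ≪_ML ρ`, one has
`lim_n ∫ |h_n^ρ(Z) - s| dμ(Z) = 0`. -/
theorem SMB_for_measures
    (ρ : Measure Cantor) [IsProbabilityMeasure ρ]
    (hcomp : ComputableMeasure ρ) (herg : Ergodic shift ρ)
    (D : ℝ)
    (hD : ∀ x : BStr, ENNReal.ofReal ((2 : ℝ) ^ (-(D * (x.length : ℝ)))) ≤ ρ (cyl x))
    (s : ℝ) (hs : Tendsto (entropyAt ρ) atTop (nhds s))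
    (μ : Measure Cantor) [IsProbabilityMeasure μ] (hml : MLAC μ ρ) :
    Tendsto (fun n => ∫ Z, |empEntropy ρ n Z - s| ∂μ) atTop (nhds 0) := by
  have hDreal : ∀ x : BStr, (2 : ℝ) ^ (-(D * x.length)) ≤ ρ.real (cyl x) := fun x =>
    (ENNReal.ofReal_le_iff_le_toReal (measure_ne_top ρ _)).1 (hD x)
  have hbound : ∀ n Z, ‖|empEntropy ρ n Z - s|‖ ≤ |D| + |s| := fun n Z => by
    rw [Real.norm_eq_abs, abs_abs]
    exact (abs_sub _ _).trans (add_le_add_left (abs_empEntropy_le hDreal n Z) _)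
  rw [← integral_zero Cantor ℝ (μ := μ)]
  refine tendsto_integral_of_dominated_convergence (fun _ => |D| + |s|)
    (fun n => ((measurable_empEntropy n).sub_const s).abs.aestronglyMeasurable)
    (integrable_const _) (fun n => ae_of_all _ (hbound n)) ?_
  filter_upwards [hml.ae_tendsto_empEntropy hcomp herg hDreal hs] with Z hZ
  simpa using (hZ.sub_const s).abs
end

section
/- Let ρ be a computable Borel probability measure on 2^ℕ and μ any Borel probability measure. Then μ ≪_ML ρ if and only if μ passes every ρ-Solovay test, i.e., lim_k μ(S_k) = 0 for every ρ-Solovay test (S_k). -/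
open MeasureTheory Filter

/-- A `ρ`-Solovay test: a sequence of uniformly effectively open sets `S_k`
with `Σ_k ρ(S_k) < ∞`. -/
def SolovayTest (ρ : Measure Cantor) (S : ℕ → Set Cantor) : Prop :=
  (∃ σ : ℕ → ℕ → BStr, Computable₂ σ ∧ ∀ k, S k = ⋃ i, cyl (σ k i)) ∧
  (∑' k, ρ (S k)) ≠ ⊤

/-!
If the measures `ρ (S k)` have finite sum at most `C`, then by Markov's inequality the set of points
lying in at least `C * 2 ^ m` of the sets `S k` has measure at most `2⁻¹ ^ m`. These sets are
uniformly effectively open, so they form a Martin-Löf test, and each of them contains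
`limsup S atTop`. Hence `MLAC μ ρ` makes `limsup S atTop` a `μ`-null set, and the reverse Fatou
inequality turns this into `μ (S k) → 0`. Conversely, a Martin-Löf test is a Solovay test because
the geometric series converges.
-/

section Multiplicity

variable {α ι : Type*}

/-- The set of points lying in at least `n` of the sets `S i`, counted with multiplicity over the
index `i`. Thresholds of this form turn a Solovay test into a Martin-Löf test. -/
def multiplicitySet (S : ι → Set α) (n : ℕ) : Set α :=
  {x | (n : ℕ∞) ≤ {i | x ∈ S i}.encard}

theorem limsup_cofinite_subset_multiplicitySet (S : ι → Set α) (n : ℕ) :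
    limsup S cofinite ⊆ multiplicitySet S n := by
  intro x hx
  have hinf : {i | x ∈ S i}.Infinite := by rwa [cofinite.limsup_set_eq] at hx
  simp [multiplicitySet, hinf.encard_eq]

theorem tsum_indicator_one_eq_encard (S : ι → Set α) (x : α) :
    ∑' i, (S i).indicator (1 : α → ENNReal) x = {i | x ∈ S i}.encard := by
  rw [← ENNReal.tsum_set_one, tsum_subtype {i | x ∈ S i} fun _ => (1 : ENNReal)]
  rfl

variable [MeasurableSpace α]

theorem natCast_mul_measure_multiplicitySet_le [Countable ι] (μ : Measure α) {S : ι → Set α}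
    (hS : ∀ i, MeasurableSet (S i)) (n : ℕ) :
    n * μ (multiplicitySet S n) ≤ ∑' i, μ (S i) := by
  have hind : ∀ i, Measurable ((S i).indicator (1 : α → ENNReal)) :=
    fun i => measurable_one.indicator (hS i)
  have hset : multiplicitySet S n =
      {x | (n : ENNReal) ≤ ∑' i, (S i).indicator (1 : α → ENNReal) x} := by
    ext x
    simp only [multiplicitySet, tsum_indicator_one_eq_encard, Set.mem_ofPred_eq]
    exact_mod_cast ENat.toENNReal_le.symm
  calc n * μ (multiplicitySet S n)
      ≤ ∫⁻ x, ∑' i, (S i).indicator 1 x ∂μ := by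
        rw [hset]
        exact mul_meas_ge_le_lintegral (.tsum hind) n
    _ = ∑' i, ∫⁻ x, (S i).indicator 1 x ∂μ := lintegral_tsum fun i => (hind i).aemeasurable
    _ = ∑' i, μ (S i) := tsum_congr fun i => lintegral_indicator_one (hS i)

theorem limsup_measure_le_measure_limsup (μ : Measure α) [IsFiniteMeasure μ] {S : ℕ → Set α}
    (hS : ∀ k, MeasurableSet (S k)) :
    limsup (fun k => μ (S k)) atTop ≤ μ (limsup S atTop) := by
  have hanti : Antitone fun n => ⋃ k ≥ n, S k :=
    fun _ _ hmn => Set.biUnion_subset_biUnion_left fun _ hk => hmn.trans hk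
  have hmeas : ∀ n, NullMeasurableSet (⋃ k ≥ n, S k) μ :=
    fun n => (MeasurableSet.biUnion (Set.to_countable _) fun k _ => hS k).nullMeasurableSet
  calc limsup (fun k => μ (S k)) atTop
      = ⨅ n, ⨆ k ≥ n, μ (S k) := limsup_eq_iInf_iSup_of_nat
    _ ≤ ⨅ n, μ (⋃ k ≥ n, S k) :=
        iInf_mono fun n => iSup₂_le fun k hk => measure_mono (Set.subset_biUnion_of_mem hk)
    _ = μ (⋂ n, ⋃ k ≥ n, S k) := (hanti.measure_iInter hmeas ⟨0, measure_ne_top μ _⟩).symm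
    _ = μ (limsup S atTop) := by
        simp only [limsup_eq_iInf_iSup_of_nat, Set.iInf_eq_iInter, Set.iSup_eq_iUnion]

theorem tendsto_measure_zero_of_measure_limsup_eq_zero {μ : Measure α} [IsFiniteMeasure μ]
    {S : ℕ → Set α} (hS : ∀ k, MeasurableSet (S k)) (h : μ (limsup S atTop) = 0) :
    Tendsto (fun k => μ (S k)) atTop (nhds 0) :=
  tendsto_of_le_liminf_of_limsup_le zero_le ((limsup_measure_le_measure_limsup μ hS).trans h.le)

end Multiplicity

section Computability

variable {α β γ : Type*} [Primcodable α] [Primcodable β] [Primcodable γ]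

theorem computable₂_nat_pow : Computable₂ ((· ^ ·) : ℕ → ℕ → ℕ) :=
  (Primrec₂.unpaired'.1 Nat.Primrec.pow).to_comp

theorem computable₂_nat_count {p : α → ℕ → Prop} [∀ a, DecidablePred (p a)]
    (hp : ComputablePred fun q : α × ℕ => p q.1 q.2) :
    Computable₂ fun a n => Nat.count (p a) n := by
  have hstep : Computable₂ fun (q : α × ℕ) (r : ℕ × ℕ) => r.2 + if p q.1 r.1 then 1 else 0 := by
    have hdec : Computable fun q : (α × ℕ) × (ℕ × ℕ) => decide (p q.1.1 q.2.1) :=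
      hp.decide.comp ((Computable.fst.comp .fst).pair (Computable.fst.comp .snd))
    refine Primrec.nat_add.to_comp.comp (Computable.snd.comp .snd) ?_
    exact (Computable.cond hdec (.const 1) (.const 0)).of_eq fun q => Bool.cond_decide ..
  refine (Computable.nat_rec .snd (.const 0) hstep).of_eq fun ⟨a, n⟩ => ?_
  induction n with
  | zero => simp
  | succ n ih => exact (congrArg (· + _) ih).trans (Nat.count_succ (p a) n).symm

theorem computablePred_exists_lt_s7 {p : α → ℕ → Prop}
    (hp : ComputablePred fun q : α × ℕ => p q.1 q.2) :
    ComputablePred fun q : α × ℕ => ∃ i < q.2, p q.1 i := by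
  classical
  have hcount : ComputablePred fun q : α × ℕ => Nat.count (p q.1) q.2 ≠ 0 :=
    Computable.computablePred <|
      (Primrec.eq.not.comp .id (.const 0)).decide.to_comp.comp (computable₂_nat_count hp)
  exact hcount.of_eq fun _ => Nat.count_ne_iff_exists

theorem primrecRel_list_isPrefix : PrimrecRel fun x y : List α => x <+: y :=
  (Primrec.eq.comp .fst (Primrec.list_take.comp (Primrec.list_length.comp .fst) .snd)).of_eq
    fun _ => List.prefix_iff_eq_take.symm

theorem exists_computable₂_range_eq_of_option {f : α → ℕ → Option β} (hf : Computable₂ f)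
    (hne : ∀ a, ∃ n b, f a n = some b) :
    ∃ σ : α → ℕ → β, Computable₂ σ ∧ ∀ a, Set.range (σ a) = {b | ∃ n, f a n = some b} := by
  have hdom : ∀ a, (Nat.rfindOpt (f a)).Dom := fun a => Nat.rfindOpt_dom.2 (hne a)
  let d (a : α) : β := (Nat.rfindOpt (f a)).get (hdom a)
  have hd : Computable d := (Partrec.rfindOpt hf).of_eq_tot fun a => Part.get_mem (hdom a)
  refine ⟨fun a n => (f a n).getD (d a), Computable.option_getD hf (hd.comp .fst), fun a => ?_⟩
  ext b
  constructor
  · rintro ⟨n, rfl⟩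
    cases hn : f a n with
    | some b => exact ⟨n, by simp [hn]⟩
    | none => simpa [hn] using Nat.rfindOpt_spec (Part.get_mem (hdom a))
  · rintro ⟨n, hn⟩
    exact ⟨n, by simp [hn]⟩

theorem exists_computable₂_range_eq {R : α → β → γ → Prop}
    (hR : ComputablePred fun p : α × β × γ => R p.1 p.2.1 p.2.2) (hne : ∀ a, ∃ b c, R a b c) :
    ∃ σ : α → ℕ → β, Computable₂ σ ∧ ∀ a, Set.range (σ a) = {b | ∃ c, R a b c} := by
  classical
  let g (a : α) (q : β × γ) : Option β := bif decide (R a q.1 q.2) then some q.1 else none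
  let f (a : α) (n : ℕ) : Option β := (Encodable.decode n).bind (g a)
  have hg : Computable₂ fun (p : α × ℕ) (q : β × γ) => g p.1 q := by
    have hpair : Computable fun p : (α × ℕ) × (β × γ) => (p.1.1, p.2) :=
      (Computable.fst.comp .fst).pair .snd
    have hdec : Computable fun p : (α × ℕ) × (β × γ) => decide (R p.1.1 p.2.1 p.2.2) :=
      (hR.decide.comp hpair :)
    exact Computable.cond hdec
      (Computable.option_some.comp (Computable.fst.comp .snd)) (.const none)
  have hf : Computable₂ f := Computable.option_bind (Computable.decode.comp .snd) hg
  have hmem : ∀ a b, (∃ n, f a n = some b) ↔ ∃ c, R a b c := by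
    intro a b
    constructor
    · rintro ⟨n, hn⟩
      obtain ⟨⟨b', c⟩, -, hq⟩ := Option.bind_eq_some_iff.1 hn
      obtain ⟨hRc, rfl⟩ : R a b' c ∧ b' = b := by simpa [g, Bool.cond_decide] using hq
      exact ⟨c, hRc⟩
    · rintro ⟨c, hc⟩
      exact ⟨Encodable.encode (b, c), by simp [f, g, hc]⟩
  obtain ⟨σ, hσ, hrange⟩ := exists_computable₂_range_eq_of_option hf fun a =>
    exists_comm.1 ((hne a).imp fun b hb => (hmem a b).2 hb)
  exact ⟨σ, hσ, fun a => (hrange a).trans (Set.ext (hmem a))⟩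

end Computability

section Cylinder

theorem cyl_subset_cyl {x y : BStr} (h : x <+: y) : cyl y ⊆ cyl x := by
  intro Z hZ i
  have hi := i.2.trans_le h.length_le
  exact (hZ ⟨i, hi⟩).trans (h.getElem i.2).symm

theorem prefix_seg_of_mem_cyl {Z : Cantor} {x : BStr} {n : ℕ} (hZ : Z ∈ cyl x)
    (hn : x.length ≤ n) : x <+: seg Z n := by
  refine List.prefix_iff_getElem.2 ⟨by simpa [seg] using hn, fun i hi => ?_⟩
  simpa [seg] using (hZ ⟨i, hi⟩).symm

end Cylinder

/-- The sets `G m` are effectively open uniformly in `m`. The enumeration `σ m` is total, so each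
`G m` is nonempty. -/
def UniformlyEffectivelyOpen (G : ℕ → Set Cantor) : Prop :=
  ∃ σ : ℕ → ℕ → BStr, Computable₂ σ ∧ ∀ m, G m = ⋃ i, cyl (σ m i)

theorem UniformlyEffectivelyOpen.measurableSet {G : ℕ → Set Cantor}
    (hG : UniformlyEffectivelyOpen G) (m : ℕ) : MeasurableSet (G m) := by
  obtain ⟨σ, -, hσ⟩ := hG
  rw [hσ]
  exact .iUnion fun i => measurableSet_cyl _

/-- The number of indices `k < s` for which one of the first `s` strings `σ k i` is a prefix of `x`.
This is a computable lower bound, improving with `s`, for the number of `k` such that the open set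
enumerated by `σ k` contains `cyl x`. -/
def coverCount (σ : ℕ → ℕ → BStr) (x : BStr) (s : ℕ) : ℕ :=
  Nat.count (fun k => ∃ i < s, σ k i <+: x) s

section CoverCount

variable {σ : ℕ → ℕ → BStr}

theorem computable₂_coverCount (hσ : Computable₂ σ) : Computable₂ (coverCount σ) := by
  have hprefix : ComputablePred fun q : ((BStr × ℕ) × ℕ) × ℕ => σ q.1.2 q.2 <+: q.1.1.1 :=
    Computable.computablePred <| primrecRel_list_isPrefix.decide.to_comp.comp
      (hσ.comp (Computable.snd.comp .fst) .snd)
      (Computable.fst.comp (Computable.fst.comp .fst))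
  have hbound : Computable fun q : (BStr × ℕ) × ℕ => (q, q.1.2) :=
    Computable.id.pair (Computable.snd.comp .fst)
  have hexists : ComputablePred fun q : (BStr × ℕ) × ℕ => ∃ i < q.1.2, σ q.2 i <+: q.1.1 :=
    Computable.computablePred
      ((computablePred_exists_lt_s7 (p := fun q i => σ q.2 i <+: q.1.1) hprefix).decide.comp hbound :)
  exact (computable₂_nat_count (p := fun q k => ∃ i < q.2, σ k i <+: q.1) hexists).comp .id .snd

theorem coverCount_le_encard {x : BStr} {Z : Cantor} (hZ : Z ∈ cyl x) (s : ℕ) :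
    (coverCount σ x s : ℕ∞) ≤ {k | Z ∈ ⋃ i, cyl (σ k i)}.encard := by
  rw [coverCount, Nat.count_eq_card_filter_range, ← Set.encard_coe_eq_coe_finsetCard]
  refine Set.encard_le_encard fun k hk => ?_
  obtain ⟨-, i, -, hi⟩ := Finset.mem_filter.1 hk
  exact Set.mem_iUnion.2 ⟨i, cyl_subset_cyl hi hZ⟩

theorem exists_le_coverCount_seg {Z : Cantor} {n : ℕ}
    (hn : (n : ℕ∞) ≤ {k | Z ∈ ⋃ i, cyl (σ k i)}.encard) :
    ∃ s, n ≤ coverCount σ (seg Z s) s := by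
  obtain ⟨K, hK, hcard⟩ := Set.exists_subset_encard_eq hn
  lift K to Finset ℕ using Set.finite_of_encard_eq_coe hcard
  choose! i hi using fun k (hk : k ∈ K) => Set.mem_iUnion.1 (hK hk)
  have hlarge : ∀ᶠ s in atTop, ∀ k ∈ K, k < s ∧ i k < s ∧ (σ k (i k)).length ≤ s :=
    (eventually_all_finset K).2 fun k _ =>
      (eventually_gt_atTop k).and ((eventually_gt_atTop (i k)).and (eventually_ge_atTop _))
  obtain ⟨s, hs⟩ := hlarge.exists
  refine ⟨s, ?_⟩
  rw [Set.encard_coe_eq_coe_finsetCard, Nat.cast_inj] at hcard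
  rw [coverCount, Nat.count_eq_card_filter_range, ← hcard]
  refine Finset.card_le_card fun k hk => ?_
  obtain ⟨hks, his, hlen⟩ := hs k hk
  exact Finset.mem_filter.2
    ⟨Finset.mem_range.2 hks, i k, his, prefix_seg_of_mem_cyl (hi k hk) hlen⟩

theorem mem_multiplicitySet_iff_exists_coverCount {Z : Cantor} {n : ℕ} :
    Z ∈ multiplicitySet (fun k => ⋃ i, cyl (σ k i)) n ↔
      ∃ x, (∃ s, n ≤ coverCount σ x s) ∧ Z ∈ cyl x := by
  constructor
  · intro hZ
    obtain ⟨s, hs⟩ := exists_le_coverCount_seg hZ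
    exact ⟨seg Z s, ⟨s, hs⟩, mem_cyl_seg Z s⟩
  · rintro ⟨x, ⟨s, hs⟩, hZ⟩
    exact (Nat.cast_le.2 hs).trans (coverCount_le_encard hZ s)

end CoverCount

theorem uniformlyEffectivelyOpen_multiplicitySet {S : ℕ → Set Cantor}
    (hS : UniformlyEffectivelyOpen S) {n : ℕ → ℕ} (hn : Computable n)
    (hne : ∀ m, (multiplicitySet S (n m)).Nonempty) :
    UniformlyEffectivelyOpen fun m => multiplicitySet S (n m) := by
  obtain ⟨σ, hσ, hSσ⟩ := hS
  obtain rfl : S = fun k => ⋃ i, cyl (σ k i) := funext hSσ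
  have hcover : ComputablePred fun p : ℕ × BStr × ℕ => n p.1 ≤ coverCount σ p.2.1 p.2.2 :=
    Computable.computablePred <| Primrec.nat_le.decide.to_comp.comp
      (hn.comp .fst)
      ((computable₂_coverCount hσ).comp (Computable.fst.comp .snd) (Computable.snd.comp .snd))
  obtain ⟨τ, hτ, hrange⟩ := exists_computable₂_range_eq
    (R := fun m x s => n m ≤ coverCount σ x s) hcover fun m => by
      obtain ⟨Z, hZ⟩ := hne m
      obtain ⟨x, hx, -⟩ := mem_multiplicitySet_iff_exists_coverCount.1 hZ
      exact ⟨x, hx⟩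
  refine ⟨τ, hτ, fun m => ?_⟩
  ext Z
  rw [← Set.biUnion_range (f := τ m) (g := cyl), hrange, mem_multiplicitySet_iff_exists_coverCount]
  simp only [Set.mem_iUnion, Set.mem_ofPred_eq, exists_prop]

theorem IsMLTest.solovayTest {ρ : Measure Cantor} {G : ℕ → Set Cantor} (hG : IsMLTest ρ G) :
    SolovayTest ρ G := by
  refine ⟨hG.1, ne_top_of_le_ne_top ?_ (ENNReal.tsum_le_tsum hG.2)⟩
  simp [ENNReal.tsum_geometric]

theorem SolovayTest.exists_isMLTest_limsup_subset {ρ : Measure Cantor} {S : ℕ → Set Cantor}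
    (hS : SolovayTest ρ S) (hne : (limsup S atTop).Nonempty) :
    ∃ G, IsMLTest ρ G ∧ ∀ m, limsup S atTop ⊆ G m := by
  obtain ⟨hopen : UniformlyEffectivelyOpen S, hsum⟩ := hS
  obtain ⟨C, hC⟩ := ENNReal.exists_nat_gt hsum
  have hC₀ : (C : ENNReal) ≠ 0 := (pos_of_gt hC).ne'
  have hsub : ∀ n, limsup S atTop ⊆ multiplicitySet S n := by
    rw [← Nat.cofinite_eq_atTop]
    exact limsup_cofinite_subset_multiplicitySet S
  have hcomp : Computable fun m => C * 2 ^ m :=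
    Primrec.nat_mul.to_comp.comp (.const C) (computable₂_nat_pow.comp (.const 2) .id)
  refine ⟨fun m => multiplicitySet S (C * 2 ^ m),
    ⟨uniformlyEffectivelyOpen_multiplicitySet hopen hcomp fun m => hne.mono (hsub _), fun m => ?_⟩,
    fun m => hsub _⟩
  have hmarkov : C * (ρ (multiplicitySet S (C * 2 ^ m)) * 2 ^ m) ≤ C * 1 := by
    calc C * (ρ (multiplicitySet S (C * 2 ^ m)) * 2 ^ m)
        = (C * 2 ^ m : ℕ) * ρ (multiplicitySet S (C * 2 ^ m)) := by push_cast; ring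
      _ ≤ ∑' k, ρ (S k) := natCast_mul_measure_multiplicitySet_le ρ hopen.measurableSet _
      _ ≤ C * 1 := by simpa using hC.le
  rw [← ENNReal.inv_pow, ← one_div, ENNReal.le_div_iff_mul_le (by simp) (by simp)]
  exact (ENNReal.mul_le_mul_iff_right hC₀ (ENNReal.natCast_ne_top C)).1 hmarkov

theorem MLAC.measure_limsup_eq_zero {μ ρ : Measure Cantor} (h : MLAC μ ρ) {S : ℕ → Set Cantor}
    (hS : SolovayTest ρ S) : μ (limsup S atTop) = 0 := by
  obtain hempty | hne := (limsup S atTop).eq_empty_or_nonempty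
  · rw [hempty, measure_empty]
  · obtain ⟨G, hG, hsub⟩ := hS.exists_isMLTest_limsup_subset hne
    exact le_antisymm ((le_iInf fun m => measure_mono (hsub m)).trans (h G hG).le) zero_le

theorem MLAC_iff_passes_solovay_tests_general (ρ μ : Measure Cantor) [IsFiniteMeasure μ] :
    MLAC μ ρ ↔
      ∀ S : ℕ → Set Cantor, SolovayTest ρ S →
        Tendsto (fun k => μ (S k)) atTop (nhds 0) := by
  constructor
  · intro h S hS
    have hopen : UniformlyEffectivelyOpen S := hS.1
    exact tendsto_measure_zero_of_measure_limsup_eq_zero hopen.measurableSet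
      (h.measure_limsup_eq_zero hS)
  · intro h G hG
    exact le_antisymm (ge_of_tendsto' (h G hG.solovayTest) fun m => iInf_le _ m) zero_le

/-- for a computable measure `ρ` and any measure `μ`,
`μ ≪_ML ρ` iff `μ` passes every `ρ`-Solovay test (`lim_k μ(S_k) = 0`). -/
theorem MLAC_iff_passes_solovay_tests
    (ρ : Measure Cantor) [IsProbabilityMeasure ρ] (hcomp : ComputableMeasure ρ)
    (μ : Measure Cantor) [IsProbabilityMeasure μ] :
    MLAC μ ρ ↔
      ∀ S : ℕ → Set Cantor, SolovayTest ρ S →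
        Tendsto (fun k => μ (S k)) atTop (nhds 0) :=
  MLAC_iff_passes_solovay_tests_general ρ μ
end
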